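/- The matrix-valued polynomials P_n satisfy P_0(x) = I and the three-term recurrence relation x·P_n(x) = P_{n+1}(x)·A_n + P_n(x)·B_n + P_{n-1}(x)·C_n for all n ≥ 0 (with P_{-1} := 0), where A_n = Σ_{i=0}^{2ℓ} (1/(2q))·(1-q^{2n+2})(1-q^{4ℓ+2n+4})/((1-q^{2i+2n+2})(1-q^{4ℓ-2i+2n+2}))·E_{i,i}, B_n = Σ_{i=0}^{2ℓ-1} (q^{2n+1}/2)·(1-q^{4ℓ-2i})(1-q^{2i+2})/((1-q^{4ℓ+2n-2i})(1-q^{2n+2i+4}))·E_{i,i+1} + Σ_{i=1}^{2ℓ} (q^{2n+1}/2)·(1-q^{2i})(1-q^{4ℓ-2i+2})/((1-q^{2n+2i})(1-q^{4ℓ-2i+2n+4}))·E_{i,i-1}, and C_n = Σ_{i=0}^{2ℓ} (q/2)·(1-q^{2n})(1-q^{4ℓ+2n+2})/((1-q^{2n+2i+2})(1-q^{4ℓ+2n-2i+2}))·E_{i,i}. -/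

import Mathlib

open Finset Polynomial MeasureTheory Matrix
open scoped BigOperators ComplexOrder

noncomputable section

/-- q-shifted factorial `(a;p)_n`. -/
def qp (a p : ℂ) (n : ℕ) : ℂ := ∏ j ∈ Finset.range n, (1 - a * p ^ j)

/-- q-Racah polynomial `R_n(μ(x);α,β,γ,δ;p)`. -/
def qRacah (p α β γ δ : ℂ) (n x : ℕ) : ℂ :=
  ∑ k ∈ Finset.range (min n x + 1),
    qp (p ^ (-(n : ℤ))) p k * qp (α * β * p ^ (n + 1)) p k *
        qp (p ^ (-(x : ℤ))) p k * qp (γ * δ * p ^ (x + 1)) p k /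
      (qp (α * p) p k * qp (β * δ * p) p k * qp (γ * p) p k * qp p p k) * p ^ k

/-- `IsUltra C` says that for each base `p`, parameter `β` and degree `n`, `C p β n` is
the continuous q-ultraspherical polynomial: it has degree at most `n` and its values at
`(z+z⁻¹)/2` are given by the symmetric Laurent sum. -/
def IsUltra (C : ℂ → ℂ → ℕ → Polynomial ℂ) : Prop :=
  ∀ (p β : ℂ) (n : ℕ),
    (C p β n).degree ≤ (n : ℕ) ∧
      ∀ z : ℂ, z ≠ 0 →
        (C p β n).eval ((z + z⁻¹) / 2) =
          ∑ r ∈ Finset.range (n + 1),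
            qp β p r * qp β p (n - r) / (qp p p r * qp p p (n - r)) * z ^ ((n : ℤ) - 2 * r)

/-- The matrix-valued polynomial `P_n` (entries in `Polynomial ℂ`); here `L = 2ℓ`. -/
def Pm (q : ℂ) (L : ℕ) (C : ℂ → ℂ → ℕ → Polynomial ℂ) (n : ℕ) :
    Matrix (Fin (L + 1)) (Fin (L + 1)) (Polynomial ℂ) :=
  Matrix.of fun i j =>
    ∑ k ∈ Finset.Icc (i : ℕ) (min L (n + (j : ℕ))),
      Polynomial.C
          ((-1 : ℂ) ^ k *
            q ^ ((n : ℤ) + (2 * (k : ℤ) + 1) * ((k : ℤ) - ((i : ℕ) : ℤ)) +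
                ((j : ℕ) : ℤ) * (2 * (k : ℤ) + 1) + 2 * (k : ℤ) * ((L : ℤ) + (n : ℤ) + 1) -
                (k : ℤ) ^ 2) *
            (qp (q ^ 2) (q ^ 2) k * qp (q ^ 2) (q ^ 2) (k + (i : ℕ)) /
              (qp (q ^ 2) (q ^ 2) (2 * k) * qp (q ^ 2) (q ^ 2) (i : ℕ))) *
            (qp (q ^ (-(2 * (L : ℤ)))) (q ^ 2) k *
                qp (q ^ (-(2 * ((j : ℕ) : ℤ) + 2 * (n : ℤ)))) (q ^ 2) k /
              (qp (q ^ 2) (q ^ 2) k * qp (q ^ (2 * (L : ℤ) + 4)) (q ^ 2) k)) *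
            (qp (q ^ 2) (q ^ 2) (n + (j : ℕ) - k) /
              qp (q ^ (4 * (k : ℤ) + 4)) (q ^ 2) (n + (j : ℕ) - k)) *
            qRacah (q ^ 2) 1 1 (q ^ (-(2 * (n : ℤ) + 2 * ((j : ℕ) : ℤ) + 2)))
              (q ^ (-(2 * (L : ℤ) + 2))) k (j : ℕ)) *
        (C (q ^ 2) (q ^ (-(2 * (k : ℤ)))) (k - (i : ℕ)) *
          C (q ^ 2) (q ^ (2 * (k : ℤ) + 2)) (n + (j : ℕ) - k))

/-- Evaluation of the matrix-valued polynomial `P_n` at a point. -/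
def evP (q : ℂ) (L : ℕ) (C : ℂ → ℂ → ℕ → Polynomial ℂ) (n : ℕ) (x : ℂ) :
    Matrix (Fin (L + 1)) (Fin (L + 1)) ℂ :=
  (Pm q L C n).map (Polynomial.eval x)

/-- The coefficients `α_t(m,n)` of the weight. -/
def alphaC (q : ℂ) (L m n t : ℕ) : ℂ :=
  q ^ (2 * (n : ℤ) * ((L : ℤ) + 1) - (n : ℤ) ^ 2 - (2 * (L : ℤ) + 3) * (t : ℤ) + (t : ℤ) ^ 2 -
      (L : ℤ) + (m : ℤ)) *
    ((1 - q ^ (2 * (L : ℤ) + 2)) / (1 - q ^ (2 * (m : ℤ) + 2))) *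
    (qp (q ^ 2) (q ^ 2) (L - n) * qp (q ^ 2) (q ^ 2) n / qp (q ^ 2) (q ^ 2) L) *
    ((-1 : ℂ) ^ ((m : ℤ) - (t : ℤ)) * qp (q ^ (2 * (m : ℤ) - 2 * (L : ℤ))) (q ^ 2) (n - t) /
      qp (q ^ (2 * (m : ℤ) + 4)) (q ^ 2) (n - t)) *
    (qp (q ^ (2 * (L : ℤ) + 4 - 2 * (t : ℤ))) (q ^ 2) t / qp (q ^ 2) (q ^ 2) t)

/-- The matrix weight `W(x)`. -/
def Wm (q : ℂ) (L : ℕ) (x : ℂ) : Matrix (Fin (L + 1)) (Fin (L + 1)) ℂ :=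
  Matrix.of fun i j =>
    ∑ t ∈ Finset.range (max (i : ℕ) (j : ℕ) + 1),
      alphaC q L (min (i : ℕ) (j : ℕ)) (max (i : ℕ) (j : ℕ)) t *
        (Polynomial.Chebyshev.U ℂ
            ((min (i : ℕ) (j : ℕ) : ℤ) + (max (i : ℕ) (j : ℕ) : ℤ) - 2 * (t : ℤ))).eval x

/-- The antidiagonal involution `J`. -/
def Jm (L : ℕ) : Matrix (Fin (L + 1)) (Fin (L + 1)) ℂ :=
  Matrix.of fun i j => if (i : ℕ) + (j : ℕ) = L then 1 else 0

/-- The diagonal leading-coefficient matrix `Γ_n`. -/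
def Gam (q : ℂ) (L n : ℕ) : Matrix (Fin (L + 1)) (Fin (L + 1)) ℂ :=
  Matrix.diagonal fun i =>
    2 ^ n * q ^ n * qp (q ^ (2 * ((i : ℕ) : ℤ) + 2)) (q ^ 2) n *
        qp (q ^ (2 * (L : ℤ) - 2 * ((i : ℕ) : ℤ) + 2)) (q ^ 2) n /
      (qp (q ^ 2) (q ^ 2) n * qp (q ^ (2 * (L : ℤ) + 4)) (q ^ 2) n)

/-- The squared-norm matrix `G_m`. -/
def Gmat (q : ℂ) (L m : ℕ) : Matrix (Fin (L + 1)) (Fin (L + 1)) ℂ :=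
  Matrix.diagonal fun i =>
    q ^ (2 * (m : ℤ) - (L : ℤ)) * (1 - q ^ (2 * (L : ℤ) + 2)) ^ 2 /
      ((1 - q ^ (2 * (m : ℤ) + 2 * ((i : ℕ) : ℤ) + 2)) *
        (1 - q ^ (2 * (L : ℤ) - 2 * ((i : ℕ) : ℤ) + 2 * (m : ℤ) + 2)))

/-- The unipotent lower triangular matrix `L(x)` of the LDU decomposition. -/
def Lm (q : ℂ) (L : ℕ) (C : ℂ → ℂ → ℕ → Polynomial ℂ) (x : ℂ) :
    Matrix (Fin (L + 1)) (Fin (L + 1)) ℂ :=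
  Matrix.of fun m k =>
    if (k : ℕ) ≤ (m : ℕ) then
      q ^ (((m : ℕ) : ℤ) - ((k : ℕ) : ℤ)) * qp (q ^ 2) (q ^ 2) (m : ℕ) *
          qp (q ^ 2) (q ^ 2) (2 * (k : ℕ) + 1) /
          (qp (q ^ 2) (q ^ 2) ((m : ℕ) + (k : ℕ) + 1) * qp (q ^ 2) (q ^ 2) (k : ℕ)) *
        (C (q ^ 2) (q ^ (2 * (k : ℕ) + 2)) ((m : ℕ) - (k : ℕ))).eval x
    else 0

/-- The claimed inverse of `L(x)`. -/
def Linv (q : ℂ) (L : ℕ) (C : ℂ → ℂ → ℕ → Polynomial ℂ) (x : ℂ) :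
    Matrix (Fin (L + 1)) (Fin (L + 1)) ℂ :=
  Matrix.of fun k n =>
    if (n : ℕ) ≤ (k : ℕ) then
      q ^ ((2 * ((k : ℕ) : ℤ) + 1) * (((k : ℕ) : ℤ) - ((n : ℕ) : ℤ))) *
          qp (q ^ 2) (q ^ 2) (k : ℕ) * qp (q ^ 2) (q ^ 2) ((k : ℕ) + (n : ℕ)) /
          (qp (q ^ 2) (q ^ 2) (2 * (k : ℕ)) * qp (q ^ 2) (q ^ 2) (n : ℕ)) *
        (C (q ^ 2) (q ^ (-(2 * ((k : ℕ) : ℤ)))) ((k : ℕ) - (n : ℕ))).eval x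
    else 0

/-- The constants `c_k(ℓ)`. -/
def ckC (q : ℂ) (L k : ℕ) : ℂ :=
  q ^ (-(L : ℤ)) / 4 * (1 - q ^ (4 * k + 2)) * qp (q ^ 2) (q ^ 2) (L + k + 1) *
      qp (q ^ 2) (q ^ 2) (L - k) * qp (q ^ 2) (q ^ 2) k ^ 4 /
    (qp (q ^ 2) (q ^ 2) (2 * k + 1) ^ 2 * qp (q ^ 2) (q ^ 2) L ^ 2)

/-- The diagonal part `T(x)` of the LDU decomposition. -/
def Tm (q : ℂ) (L : ℕ) (x : ℂ) : Matrix (Fin (L + 1)) (Fin (L + 1)) ℂ :=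
  Matrix.diagonal fun k =>
    ckC q L (k : ℕ) *
      (4 * ∏ j ∈ Finset.Icc 1 (k : ℕ), (1 - 2 * (2 * x ^ 2 - 1) * q ^ (2 * j) + q ^ (4 * j)))

/-- The coefficient matrix `M₁(z)` of the q-difference operator `D₁`. -/
def M1f (q : ℂ) (L : ℕ) (z : ℂ) : Matrix (Fin (L + 1)) (Fin (L + 1)) ℂ :=
  Matrix.of fun i j =>
    if (j : ℕ) = (i : ℕ) + 1 then
      -(q ^ (1 - ((i : ℕ) : ℤ)) * (1 - q ^ (2 * (i : ℕ) + 2)) / (1 - q ^ 2) ^ 2 *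
        (z / (1 - z ^ 2)))
    else if (j : ℕ) = (i : ℕ) then
      q ^ (1 - ((i : ℕ) : ℤ)) / (1 - q ^ 2) ^ 2 *
        ((1 - q ^ (2 * (i : ℕ) + 2) * z ^ 2) / (1 - z ^ 2))
    else 0

/-- `M₂(z) = J M₁(z) J`. -/
def M2f (q : ℂ) (L : ℕ) (z : ℂ) : Matrix (Fin (L + 1)) (Fin (L + 1)) ℂ :=
  Jm L * M1f q L z * Jm L

/-- The eigenvalue matrix `Λ_n(1)`. -/
def Lam1 (q : ℂ) (L n : ℕ) : Matrix (Fin (L + 1)) (Fin (L + 1)) ℂ :=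
  Matrix.diagonal fun j =>
    (q ^ (-((j : ℕ) : ℤ) - (n : ℤ) - 1) + q ^ (((j : ℕ) : ℤ) + (n : ℤ) + 1)) / (q⁻¹ - q) ^ 2

/-- The eigenvalue matrix `Λ_n(2) = J Λ_n(1) J`. -/
def Lam2 (q : ℂ) (L n : ℕ) : Matrix (Fin (L + 1)) (Fin (L + 1)) ℂ :=
  Jm L * Lam1 q L n * Jm L

/-- The diagonal coefficient matrix `K₁(z)` of the decoupled operator. -/
def K1f (q : ℂ) (L : ℕ) (z : ℂ) : Matrix (Fin (L + 1)) (Fin (L + 1)) ℂ :=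
  Matrix.diagonal fun i =>
    q ^ (1 - ((i : ℕ) : ℤ)) / (1 - q ^ 2) ^ 2 *
      ((1 - q ^ (2 * (i : ℕ) + 2) * z ^ 2) / (1 - z ^ 2))

/-- The symmetric Laurent polynomial `Ĉ_k(z;β|p)`. -/
def Chat (p β : ℂ) (k : ℕ) (z : ℂ) : ℂ :=
  ∑ r ∈ Finset.range (k + 1),
    qp β p r * qp β p (k - r) / (qp p p r * qp p p (k - r)) * z ^ ((k : ℤ) - 2 * (r : ℤ))

/-- The matrix polynomials `R_n(x) = L(x)ᵀ P_n(x) Γ_n⁻¹`. -/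
def Rmat (q : ℂ) (L : ℕ) (C : ℂ → ℂ → ℕ → Polynomial ℂ) (n : ℕ) (x : ℂ) :
    Matrix (Fin (L + 1)) (Fin (L + 1)) ℂ :=
  (Lm q L C x)ᵀ * evP q L C n x * (Gam q L n)⁻¹


/-- The matrix `A_n` of the three-term recurrence. -/
def Amat (q : ℂ) (L n : ℕ) : Matrix (Fin (L + 1)) (Fin (L + 1)) ℂ :=
  Matrix.diagonal fun i =>
    1 / (2 * q) * ((1 - q ^ (2 * (n : ℤ) + 2)) * (1 - q ^ (2 * (L : ℤ) + 2 * (n : ℤ) + 4))) /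
      ((1 - q ^ (2 * ((i : ℕ) : ℤ) + 2 * (n : ℤ) + 2)) *
        (1 - q ^ (2 * (L : ℤ) - 2 * ((i : ℕ) : ℤ) + 2 * (n : ℤ) + 2)))

/-- The matrix `B_n` of the three-term recurrence. -/
def Bmat (q : ℂ) (L n : ℕ) : Matrix (Fin (L + 1)) (Fin (L + 1)) ℂ :=
  Matrix.of fun i j =>
    if (j : ℕ) = (i : ℕ) + 1 then
      q ^ (2 * n + 1) / 2 *
          ((1 - q ^ (2 * (L : ℤ) - 2 * ((i : ℕ) : ℤ))) * (1 - q ^ (2 * ((i : ℕ) : ℤ) + 2))) /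
        ((1 - q ^ (2 * (L : ℤ) + 2 * (n : ℤ) - 2 * ((i : ℕ) : ℤ))) *
          (1 - q ^ (2 * (n : ℤ) + 2 * ((i : ℕ) : ℤ) + 4)))
    else if (i : ℕ) = (j : ℕ) + 1 then
      q ^ (2 * n + 1) / 2 *
          ((1 - q ^ (2 * ((i : ℕ) : ℤ))) * (1 - q ^ (2 * (L : ℤ) - 2 * ((i : ℕ) : ℤ) + 2))) /
        ((1 - q ^ (2 * (n : ℤ) + 2 * ((i : ℕ) : ℤ))) *
          (1 - q ^ (2 * (L : ℤ) - 2 * ((i : ℕ) : ℤ) + 2 * (n : ℤ) + 4)))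
    else 0

/-- The matrix `C_n` of the three-term recurrence. -/
def Cmat (q : ℂ) (L n : ℕ) : Matrix (Fin (L + 1)) (Fin (L + 1)) ℂ :=
  Matrix.diagonal fun i =>
    q / 2 * ((1 - q ^ (2 * (n : ℤ))) * (1 - q ^ (2 * (L : ℤ) + 2 * (n : ℤ) + 2))) /
      ((1 - q ^ (2 * (n : ℤ) + 2 * ((i : ℕ) : ℤ) + 2)) *
        (1 - q ^ (2 * (L : ℤ) + 2 * (n : ℤ) - 2 * ((i : ℕ) : ℤ) + 2)))

/-
Multiplying `P_n(x)` by the transpose of the unipotent matrix `L(x)` decouples it: the entry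
`(k, j)` of `L(x)ᵀ P_n(x)` is an explicit constant times a `q`-Racah polynomial of degree `k` times
a continuous `q`-ultraspherical polynomial of degree `n + j - k` in `x`. Entrywise, the recurrence
then asserts that the three-term recurrence in `x` of the ultraspherical factor matches two
contiguous relations of the `q`-Racah factor, which involve only the neighbours `(n ± 1, j)` and
`(n, j ± 1)`. At `n = 0` the `q`-Racah factor is summed by the `q`-Saalschütz formula and the
decoupled matrix is `L(x)ᵀ`, so `P_0 = I`. That `Linv` inverts `L(x)` is a biorthogonality: the
columns of `L(x)` and the rows of `Linv` are eigenvectors of adjoint recurrences with distinct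
eigenvalues `p^(-k) + p^(k+1)`, where `p = q^2`.
-/

section ShiftedFactorial

variable {a p : ℂ}

theorem qp_zero (a p : ℂ) : qp a p 0 = 1 := Finset.prod_range_zero _

theorem qp_succ (a p : ℂ) (n : ℕ) : qp a p (n + 1) = qp a p n * (1 - a * p ^ n) :=
  Finset.prod_range_succ _ _

theorem qp_add (a p : ℂ) (m n : ℕ) : qp a p (m + n) = qp a p m * qp (a * p ^ m) p n := by
  simp only [qp, Finset.prod_range_add, pow_add, mul_assoc]

theorem qp_succ' (a p : ℂ) (n : ℕ) : qp a p (n + 1) = (1 - a) * qp (a * p) p n := by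
  simp only [qp, Finset.prod_range_succ', pow_zero, mul_one, pow_succ', mul_assoc, mul_comm (1 - a)]

theorem one_sub_mul_qp_mul (a p : ℂ) (n : ℕ) :
    (1 - a) * qp (a * p) p n = qp a p n * (1 - a * p ^ n) := by
  rw [← qp_succ', qp_succ]

theorem qp_eq_zero_iff {n : ℕ} : qp a p n = 0 ↔ ∃ j < n, a * p ^ j = 1 := by
  simp only [qp, Finset.prod_eq_zero_iff, Finset.mem_range, sub_eq_zero, eq_comm (a := (1 : ℂ))]

theorem qp_ne_zero_of_le {m n : ℕ} (hmn : m ≤ n) (h : qp a p n ≠ 0) : qp a p m ≠ 0 := by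
  obtain ⟨d, rfl⟩ := Nat.exists_eq_add_of_le hmn
  exact left_ne_zero_of_mul (qp_add a p m d ▸ h)

theorem qp_succ_ne_zero_iff {n : ℕ} : qp a p (n + 1) ≠ 0 ↔ qp a p n ≠ 0 ∧ 1 - a * p ^ n ≠ 0 := by
  rw [qp_succ, mul_ne_zero_iff]

theorem zpow_eq_one_iff_of_not_isOfFinOrder (hp : ¬ IsOfFinOrder p) {n : ℤ} :
    p ^ n = 1 ↔ n = 0 := by
  refine ⟨fun h ↦ ?_, fun h ↦ by rw [h, zpow_zero]⟩
  by_contra hn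
  refine hp (isOfFinOrder_iff_pow_eq_one.2 ⟨n.natAbs, Int.natAbs_pos.2 hn, ?_⟩)
  rcases Int.natAbs_eq n with h' | h' <;> rw [h'] at h
  · exact_mod_cast h
  · rwa [_root_.zpow_neg, zpow_natCast, inv_eq_one] at h

theorem one_sub_zpow_ne_zero (hp : ¬ IsOfFinOrder p) {n : ℤ} (hn : n ≠ 0) :
    1 - p ^ n ≠ 0 :=
  sub_ne_zero.2 fun h ↦ hn ((zpow_eq_one_iff_of_not_isOfFinOrder hp).1 h.symm)

theorem zpow_two_mul_eq_sq_zpow (q : ℂ) (n : ℤ) : q ^ (2 * n) = (q ^ 2) ^ n := by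
  rw [_root_.zpow_mul, zpow_ofNat]

theorem qp_zpow_eq_zero_iff (hp₀ : p ≠ 0) (hp : ¬ IsOfFinOrder p) {n : ℕ} {k : ℤ} :
    qp (p ^ k) p n = 0 ↔ k ≤ 0 ∧ 0 < k + n := by
  simp_rw [qp_eq_zero_iff, ← zpow_natCast p, ← zpow_add₀ hp₀,
    zpow_eq_one_iff_of_not_isOfFinOrder hp]
  exact ⟨fun ⟨j, _, h⟩ ↦ by omega, fun h ↦ ⟨(-k).toNat, by omega, by omega⟩⟩

theorem qp_pow_succ_ne_zero (hp : ¬ IsOfFinOrder p) (m n : ℕ) : qp (p ^ (m + 1)) p n ≠ 0 := by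
  rintro h
  obtain ⟨j, -, h⟩ := qp_eq_zero_iff.1 h
  exact hp (isOfFinOrder_iff_pow_eq_one.2 ⟨m + 1 + j, by omega, by rw [pow_add, h]⟩)

theorem qp_self_ne_zero (hp : ¬ IsOfFinOrder p) (n : ℕ) : qp p p n ≠ 0 := by
  simpa using qp_pow_succ_ne_zero hp 0 n

theorem qp_sq_zpow_neg_mul_qp_sub {q : ℂ} (hq : q ≠ 0) {k j : ℕ} (hkj : k ≤ j) :
    (-1) ^ k * (qp ((q ^ 2) ^ (-j : ℤ)) (q ^ 2) k * qp (q ^ 2) (q ^ 2) (j - k)) =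
      q ^ (k ^ 2 - k - 2 * j * k : ℤ) * qp (q ^ 2) (q ^ 2) j := by
  induction k with
  | zero => simp [qp_zero]
  | succ k ih =>
    have ih := ih (by omega)
    obtain ⟨d, rfl⟩ := Nat.exists_eq_add_of_le hkj
    rw [show k + 1 + d - k = d + 1 by omega, qp_succ (q ^ 2)] at ih
    rw [Nat.add_sub_cancel_left, qp_succ]
    have hexp : q ^ ((k + 1 : ℕ) ^ 2 - (k + 1 : ℕ) - 2 * (k + 1 + d : ℕ) * (k + 1 : ℕ) : ℤ) =
        q ^ (k ^ 2 - k - 2 * (k + 1 + d : ℕ) * k : ℤ) * ((q ^ 2) ^ (d + 1))⁻¹ := by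
      rw [← pow_mul, ← zpow_natCast, ← _root_.zpow_neg, ← zpow_add₀ hq]
      congr 1
      push_cast
      ring
    have hfactor : (q ^ 2) ^ (-(k + 1 + d : ℕ) : ℤ) * (q ^ 2) ^ k = ((q ^ 2) ^ (d + 1))⁻¹ := by
      rw [← zpow_natCast (q ^ 2) k, ← zpow_natCast (q ^ 2) (d + 1), ← _root_.zpow_neg,
        ← zpow_add₀ (pow_ne_zero 2 hq)]
      congr 1
      push_cast
      ring
    have hd := pow_ne_zero (d + 1) (pow_ne_zero 2 hq)
    rw [hexp, hfactor]
    rw [← pow_succ'] at ih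
    generalize (q ^ 2) ^ (d + 1) = y at *
    linear_combination (norm := (field_simp; ring)) ih / y

end ShiftedFactorial

section Ultraspherical

/-- The generating function `∑ (β;p)_n / (p;p)_n tⁿ` of the binomial coefficients in the Laurent
sum that defines the continuous `q`-ultraspherical polynomials. -/
def qBinomialSeries (p β : ℂ) : PowerSeries ℂ :=
  PowerSeries.mk fun n ↦ qp β p n / qp p p n

/-- The value `C_s(x;β|p)` extended by zero to negative degrees `s`. -/
def ultraExt (C : ℂ → ℂ → ℕ → Polynomial ℂ) (p β x : ℂ) (s : ℤ) : ℂ :=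
  if 0 ≤ s then (C p β s.toNat).eval x else 0

/-- The normalisation `(p;p)_s / (β²;p)_s C_s(x;β|p)`. -/
def ultraNormalized (C : ℂ → ℂ → ℕ → Polynomial ℂ) (p β x : ℂ) (s : ℕ) : ℂ :=
  qp p p s / qp (β ^ 2) p s * (C p β s).eval x

variable {C : ℂ → ℂ → ℕ → Polynomial ℂ} {p : ℂ}

theorem ultraExt_natCast (C : ℂ → ℂ → ℕ → Polynomial ℂ) (p β x : ℂ) (s : ℕ) :
    ultraExt C p β x s = (C p β s).eval x := by
  simp [ultraExt]

theorem ultraExt_of_neg (C : ℂ → ℂ → ℕ → Polynomial ℂ) (p β x : ℂ) {s : ℤ} (hs : s < 0) :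
    ultraExt C p β x s = 0 :=
  if_neg hs.not_ge

theorem IsUltra.eval_zero (hC : IsUltra C) (p β x : ℂ) : (C p β 0).eval x = 1 := by
  obtain ⟨c, hc⟩ : ∃ c, C p β 0 = Polynomial.C c :=
    ⟨_, Polynomial.eq_C_of_degree_le_zero (hC p β 0).1⟩
  simpa [hc, qp_zero] using (hC p β 0).2 1 one_ne_zero

theorem exists_ne_zero_add_inv_div_two (x : ℂ) : ∃ z : ℂ, z ≠ 0 ∧ (z + z⁻¹) / 2 = x := by
  obtain ⟨w, hw⟩ := IsAlgClosed.exists_pow_nat_eq (x ^ 2 - 1) two_pos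
  have hz : (x + w) * (x - w) = 1 := by linear_combination -hw
  refine ⟨x + w, left_ne_zero_of_mul_eq_one hz, ?_⟩
  rw [← eq_inv_of_mul_eq_one_right hz]
  ring

theorem one_sub_X_mul_rescale_qBinomialSeries (hp : ¬ IsOfFinOrder p) (β z : ℂ) :
    (1 - PowerSeries.C z * PowerSeries.X) * PowerSeries.rescale z (qBinomialSeries p β) =
      (1 - PowerSeries.C (β * z) * PowerSeries.X) *
        PowerSeries.rescale p (PowerSeries.rescale z (qBinomialSeries p β)) := by
  ext (_ | n)
  · simp only [sub_mul, one_mul, mul_assoc, map_sub, PowerSeries.coeff_zero_X_mul,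
      PowerSeries.coeff_C_mul, PowerSeries.coeff_rescale, pow_zero, one_mul, mul_zero]
  · have hne : 1 - p * p ^ n ≠ 0 :=
      right_ne_zero_of_mul (qp_succ p p n ▸ qp_self_ne_zero hp (n + 1))
    have hsucc : qp β p (n + 1) / qp p p (n + 1) * (1 - p * p ^ n) =
        qp β p n / qp p p n * (1 - β * p ^ n) := by
      rw [qp_succ, qp_succ, mul_div_mul_comm, mul_assoc, div_mul_cancel₀ _ hne]
    simp only [sub_mul, one_mul, mul_assoc, map_sub, PowerSeries.coeff_succ_X_mul,
      PowerSeries.coeff_C_mul, PowerSeries.coeff_rescale, qBinomialSeries, PowerSeries.coeff_mk]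
    linear_combination z ^ (n + 1) * hsucc

theorem coeff_rescale_qBinomialSeries_mul (hC : IsUltra C) (p β : ℂ) {z : ℂ} (hz : z ≠ 0) (n : ℕ) :
    PowerSeries.coeff n (PowerSeries.rescale z (qBinomialSeries p β) *
      PowerSeries.rescale z⁻¹ (qBinomialSeries p β)) = (C p β n).eval ((z + z⁻¹) / 2) := by
  rw [(hC p β n).2 z hz, PowerSeries.coeff_mul, Finset.Nat.sum_antidiagonal_swap.symm,
    Finset.Nat.sum_antidiagonal_eq_sum_range_succ_mk]
  refine Finset.sum_congr rfl fun r hr ↦ ?_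
  have hz' : z ^ ((n : ℤ) - 2 * r) = z ^ (n - r) * z⁻¹ ^ r := by
    rw [inv_pow, ← div_eq_mul_inv, ← zpow_natCast, ← zpow_natCast, ← zpow_sub₀ hz,
      Nat.cast_sub (Finset.mem_range_succ_iff.1 hr)]
    congr 1; ring
  simp only [PowerSeries.coeff_rescale, qBinomialSeries, PowerSeries.coeff_mk, Prod.swap, hz']
  ring

/-- The generating function of the `C_n(x;β|p)` satisfies a first-order `q`-difference equation;
it factors as a product over `z` and `z⁻¹`, and each factor does. -/
theorem ultraGenerating_qDifference (hC : IsUltra C) (hp : ¬ IsOfFinOrder p) (β x : ℂ) :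
    (1 - PowerSeries.C (2 * x) * PowerSeries.X + PowerSeries.X ^ 2) *
        PowerSeries.mk (fun n ↦ (C p β n).eval x) =
      (1 - PowerSeries.C (2 * β * x) * PowerSeries.X + PowerSeries.C (β ^ 2) * PowerSeries.X ^ 2) *
        PowerSeries.rescale p (PowerSeries.mk fun n ↦ (C p β n).eval x) := by
  obtain ⟨z, hz, rfl⟩ := exists_ne_zero_add_inv_div_two x
  have hG : PowerSeries.mk (fun n ↦ (C p β n).eval ((z + z⁻¹) / 2)) =
      PowerSeries.rescale z (qBinomialSeries p β) *
        PowerSeries.rescale z⁻¹ (qBinomialSeries p β) := by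
    ext n
    rw [PowerSeries.coeff_mk, coeff_rescale_qBinomialSeries_mul hC p β hz]
  have hzz : PowerSeries.C z * PowerSeries.C z⁻¹ = (1 : PowerSeries ℂ) := by
    rw [← map_mul, mul_inv_cancel₀ hz, map_one]
  have hfactors := congrArg₂ (· * ·) (one_sub_X_mul_rescale_qBinomialSeries hp β z)
    (one_sub_X_mul_rescale_qBinomialSeries hp β z⁻¹)
  have hx : 2 * β * ((z + z⁻¹) / 2) = β * (z + z⁻¹) := by ring
  rw [hG, hx, mul_div_cancel₀ _ (two_ne_zero' ℂ)]
  simp only [map_mul, map_pow, map_add] at hfactors ⊢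
  generalize PowerSeries.rescale z _ = F at *
  generalize PowerSeries.rescale z⁻¹ _ = F' at *
  linear_combination hfactors - PowerSeries.X ^ 2 * (F * F' -
    PowerSeries.C β ^ 2 * (PowerSeries.rescale p F * PowerSeries.rescale p F')) * hzz

theorem ultraExt_recurrence (hC : IsUltra C) (hp : ¬ IsOfFinOrder p) (β x : ℂ) (s : ℤ) :
    (1 - p ^ (s + 1)) * ultraExt C p β x (s + 1) =
      2 * x * (1 - β * p ^ s) * ultraExt C p β x s -
        (1 - β ^ 2 * p ^ (s - 1)) * ultraExt C p β x (s - 1) := by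
  have hcoeff (n : ℕ) := congrArg (PowerSeries.coeff n) (ultraGenerating_qDifference hC hp β x)
  simp only [add_mul, sub_mul, one_mul, mul_assoc, map_sub, map_add, PowerSeries.coeff_C_mul,
    PowerSeries.coeff_rescale, PowerSeries.coeff_mk] at hcoeff
  obtain hs | rfl | rfl | ⟨n, rfl⟩ : s < -1 ∨ s = -1 ∨ s = 0 ∨ ∃ n : ℕ, s = (n + 1 : ℕ) := by
    have : 0 < s → ∃ n : ℕ, s = (n + 1 : ℕ) := fun hs ↦ ⟨(s - 1).toNat, by omega⟩
    grind
  · simp [ultraExt_of_neg, show s < 0 by omega, show s + 1 < 0 by omega, show s - 1 < 0 by omega]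
  · simp [ultraExt_of_neg]
  · have h := hcoeff (0 + 1)
    simp only [PowerSeries.coeff_succ_X_mul, PowerSeries.coeff_X_pow_mul', PowerSeries.coeff_mk,
      PowerSeries.coeff_rescale] at h
    rw [if_neg (by norm_num), if_neg (by norm_num), mul_zero, add_zero, add_zero] at h
    rw [ultraExt_of_neg C p β x (by norm_num : (0 - 1 : ℤ) < 0), mul_zero, sub_zero, zpow_zero,
      zero_add, zpow_one, show ultraExt C p β x 0 = _ from ultraExt_natCast C p β x 0,
      show ultraExt C p β x 1 = _ from ultraExt_natCast C p β x 1]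
    linear_combination h
  · have h := hcoeff (n + 2)
    simp only [PowerSeries.coeff_succ_X_mul, PowerSeries.coeff_X_pow_mul,
      PowerSeries.coeff_rescale, PowerSeries.coeff_mk] at h
    have hs : ((n + 1 : ℕ) : ℤ) + 1 = (n + 2 : ℕ) := by push_cast; ring
    have hs' : ((n + 1 : ℕ) : ℤ) - 1 = n := by push_cast; ring
    rw [hs, hs']
    simp only [ultraExt_natCast, zpow_natCast]
    linear_combination h

/-- The truncated subtraction at `s = 0` is harmless, since its coefficient vanishes there. -/
theorem ultraNormalized_recurrence (hC : IsUltra C) (hp : ¬ IsOfFinOrder p) {β : ℂ}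
    (hβ : ∀ s, qp (β ^ 2) p s ≠ 0) (x : ℂ) (s : ℕ) :
    (1 - β ^ 2 * p ^ s) * ultraNormalized C p β x (s + 1) =
      2 * x * (1 - β * p ^ s) * ultraNormalized C p β x s -
        (1 - p ^ s) * ultraNormalized C p β x (s - 1) := by
  have hweight (r : ℕ) : qp p p (r + 1) / qp (β ^ 2) p (r + 1) * (1 - β ^ 2 * p ^ r) =
      qp p p r / qp (β ^ 2) p r * (1 - p ^ (r + 1)) := by
    have hne : 1 - β ^ 2 * p ^ r ≠ 0 :=
      right_ne_zero_of_mul (qp_succ (β ^ 2) p r ▸ hβ (r + 1))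
    rw [qp_succ, qp_succ, mul_div_mul_comm, mul_assoc, div_mul_cancel₀ _ hne, pow_succ' p]
  have h := ultraExt_recurrence hC hp β x s
  rw [← Nat.cast_add_one, ultraExt_natCast, ultraExt_natCast, zpow_natCast, zpow_natCast] at h
  rcases s with _ | s
  · rw [ultraExt_of_neg C p β x (by norm_num)] at h
    simp only [ultraNormalized]
    linear_combination (C p β 1).eval x * hweight 0 + qp p p 0 / qp (β ^ 2) p 0 * h
  · have hs' : ((s + 1 : ℕ) : ℤ) - 1 = s := by push_cast; ring
    rw [hs', ultraExt_natCast, zpow_natCast] at h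
    simp only [ultraNormalized, Nat.add_sub_cancel]
    linear_combination (C p β (s + 2)).eval x * hweight (s + 1) +
      qp p p (s + 1) / qp (β ^ 2) p (s + 1) * h - (C p β s).eval x * hweight s

end Ultraspherical

section Saalschuetz

variable {p b c d : ℂ}

/-- The `m`-th summand of the balanced series `₃φ₂(e⁻¹, b, cde/(bp); c, d; p, p)`, which terminates
when `e = pⁿ`. -/
def balancedTerm (p b c d e : ℂ) (m : ℕ) : ℂ :=
  qp e⁻¹ p m * qp (c * d * e / (b * p)) p m * qp b p m / (qp p p m * qp c p m * qp d p m) * p ^ m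

theorem sum_balancedTerm_contiguous (hp₀ : p ≠ 0) (hp : ¬ IsOfFinOrder p) (hb : b ≠ 0) {e : ℂ}
    (he : e ≠ 0) {M : ℕ} (hc : qp c p M ≠ 0) (hd : qp d p M ≠ 0) :
    ∑ m ∈ range (M + 1), (b * (1 - c * e) * (1 - d * e) * balancedTerm p b c d (e * p) m -
        (b - c * e) * (b - d * e) * balancedTerm p b c d e m) =
      (b - c * d * e ^ 2) * (qp e⁻¹ p M * qp (c * d * e / b) p M * qp b p (M + 1)) /
        (qp p p M * qp c p M * qp d p M) := by
  have hshift : c * d * (e * p) / (b * p) = c * d * e / b := by field_simp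
  induction M with
  | zero =>
    simp [balancedTerm, qp_zero, qp_succ]
    ring
  | succ M ih =>
    have h₁ : c * d * e / (b * p) * p = c * d * e / b := by field_simp
    have h₂ : (e * p)⁻¹ * p = e⁻¹ := by field_simp
    obtain ⟨hpM, hpM'⟩ := qp_succ_ne_zero_iff.1 (qp_self_ne_zero hp (M + 1))
    obtain ⟨hcM, hcM'⟩ := qp_succ_ne_zero_iff.1 hc
    obtain ⟨hdM, hdM'⟩ := qp_succ_ne_zero_iff.1 hd
    rw [Finset.sum_range_succ, ih hcM hdM]
    simp only [balancedTerm, hshift]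
    rw [qp_succ' (e * p)⁻¹, h₂, qp_succ' (c * d * e / (b * p)), h₁]
    simp only [qp_succ, pow_succ' p M]
    clear ih
    generalize qp e⁻¹ p M = X, qp (c * d * e / b) p M = Y, qp b p M = B, qp p p M = D₁,
      qp c p M = D₂, qp d p M = D₃, p ^ M = P at *
    rw [mul_comm] at hpM'
    field_simp
    ring

theorem sum_balancedTerm (hp₀ : p ≠ 0) (hp : ¬ IsOfFinOrder p) (hb : b ≠ 0) {n : ℕ}
    (hc : qp c p n ≠ 0) (hd : qp d p n ≠ 0) :
    ∑ m ∈ range (n + 1), balancedTerm p b c d (p ^ n) m =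
      b ^ n * qp (c / b) p n * qp (d / b) p n / (qp c p n * qp d p n) := by
  induction n with
  | zero => simp [balancedTerm, qp_zero]
  | succ n ih =>
    have hterminates : qp (p ^ n)⁻¹ p (n + 1) = 0 :=
      qp_eq_zero_iff.2 ⟨n, n.lt_succ_self, inv_mul_cancel₀ (pow_ne_zero n hp₀)⟩
    have hstep := sum_balancedTerm_contiguous hp₀ hp hb (pow_ne_zero n hp₀) hc hd
    rw [hterminates, Finset.sum_sub_distrib, ← Finset.mul_sum, ← Finset.mul_sum,
      Finset.sum_range_succ (balancedTerm p b c d (p ^ n)),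
      ih (qp_ne_zero_of_le n.le_succ hc) (qp_ne_zero_of_le n.le_succ hd), balancedTerm,
      hterminates, ← pow_succ] at hstep
    simp only [zero_mul, mul_zero, zero_div, add_zero, sub_eq_zero] at hstep
    obtain ⟨hcn, hcn'⟩ := qp_succ_ne_zero_iff.1 hc
    obtain ⟨hdn, hdn'⟩ := qp_succ_ne_zero_iff.1 hd
    refine mul_left_cancel₀ (mul_ne_zero (mul_ne_zero hb hcn') hdn') (hstep.trans ?_)
    simp only [qp_succ]
    rw [mul_comm] at hdn'
    field_simp
    ring

end Saalschuetz

section Racah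

/-- The `m`-th summand of `racahSum`. -/
def racahTerm (p a b c : ℂ) (k m : ℕ) : ℂ :=
  qp (p ^ k)⁻¹ p m * qp (p ^ (k + 1)) p m * qp a p m * qp (b * c / p) p m *
    qp (a * b * p ^ m) p (k - m) / (qp p p m ^ 2 * qp c p m) * p ^ m

/-- The `q`-Racah polynomial `(γp;p)_k R_k(μ(x);1,1,γ,δ;p)`, cleared of the denominators `(γp;p)_m`,
as a function of `a = p⁻ˣ`, `b = γpˣ⁺¹` and `c = δp`. -/
def racahSum (p a b c : ℂ) (k : ℕ) : ℂ :=
  ∑ m ∈ range (k + 1), racahTerm p a b c k m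

variable {p c : ℂ} {k : ℕ}

theorem qp_mul_qRacah (hp₀ : p ≠ 0) {γ : ℂ} (hγ : qp (γ * p) p k ≠ 0) (δ : ℂ) (x : ℕ) :
    qp (γ * p) p k * qRacah p 1 1 γ δ k x =
      racahSum p (p ^ x)⁻¹ (γ * p ^ (x + 1)) (δ * p) k := by
  have hsubset : range (min k x + 1) ⊆ range (k + 1) := by
    rw [Finset.range_subset_range]; omega
  rw [qRacah, racahSum, Finset.mul_sum]
  refine (Finset.sum_congr rfl fun m hm ↦ ?_).trans
    (Finset.sum_subset hsubset fun m hmk hm ↦ ?_)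
  · have hmk : m ≤ k := by have := Finset.mem_range.1 hm; omega
    have hsplit := qp_add (γ * p) p m (k - m)
    rw [Nat.add_sub_cancel' hmk] at hsplit
    have hγm := qp_ne_zero_of_le hmk hγ
    have h₁ : (p ^ x)⁻¹ * (γ * p ^ (x + 1)) = γ * p := by field_simp; ring
    have h₂ : γ * p ^ (x + 1) * (δ * p) / p = γ * δ * p ^ (x + 1) := by field_simp
    simp only [racahTerm, h₁, h₂, hsplit, one_mul, _root_.zpow_neg, zpow_natCast]
    field_simp
  · rw [Finset.mem_range] at hm
    rw [Finset.mem_range] at hmk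
    have hxm : qp (p ^ x)⁻¹ p m = 0 :=
      qp_eq_zero_iff.2 ⟨x, by omega, inv_mul_cancel₀ (pow_ne_zero x hp₀)⟩
    simp only [racahTerm, hxm, mul_zero, zero_mul, zero_div]

/-- The `m`-th summand of the difference of the two sides of `racahSum_div_contiguous`. -/
def racahDefect (p a b c : ℂ) (k m : ℕ) : ℂ :=
  (a * b - p ^ (k + 2)) * (b * c - a * p) * racahTerm p a b c k m -
    p ^ k * (a * (b - p) * (b * c - p ^ 2) * racahTerm p a (b / p) c k m +
      p * b * (a - p) * (c - a) * racahTerm p (a / p) b c k m)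

/-- The closed form of the sum of `racahDefect` up to `m`, multiplied by `1 - a b pᵏ⁻¹`. -/
def racahCertificate (p a b c : ℂ) (k m : ℕ) : ℂ :=
  -((b * c - a * p) * a * b * p ^ k) *
    (qp (p ^ k)⁻¹ p (m + 1) * qp (p ^ (k + 1)) p (m + 1) * qp a p m * qp (b * c / p) p m *
      qp (a * b * p ^ m) p (k - m)) / (qp p p m ^ 2 * qp c p m)

theorem one_sub_mul_racahDefect_zero (hp₀ : p ≠ 0) (a b c : ℂ) (k : ℕ) :
    (1 - a * b * p ^ k / p) * racahDefect p a b c k 0 = racahCertificate p a b c k 0 := by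
  have hshift := one_sub_mul_qp_mul (a * b / p) p k
  rw [div_mul_cancel₀ _ hp₀] at hshift
  have h₁ : a * (b / p) = a * b / p := by ring
  have h₂ : a / p * b = a * b / p := by ring
  simp only [racahDefect, racahCertificate, racahTerm, qp_zero, qp_succ, zero_add, pow_zero,
    mul_one, Nat.sub_zero, h₁, h₂]
  have hk := pow_ne_zero k hp₀
  rw [pow_add p k 2, pow_succ p k]
  generalize p ^ k = K at *
  linear_combination (norm := (field_simp; ring))
    K * (a * (b - p) * (b * c - p ^ 2) + p * b * (a - p) * (c - a)) * hshift

theorem one_sub_mul_racahDefect_succ (hp₀ : p ≠ 0) (hp : ¬ IsOfFinOrder p) (hc : qp c p k ≠ 0)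
    (a b : ℂ) {m : ℕ} (hm : m + 1 ≤ k) :
    (1 - a * b * p ^ k / p) * racahDefect p a b c k (m + 1) =
      racahCertificate p a b c k (m + 1) - racahCertificate p a b c k m := by
  obtain ⟨d, rfl⟩ := Nat.exists_eq_add_of_le hm
  have hd : m + 1 + d - m = d + 1 := by omega
  have hshift := one_sub_mul_qp_mul (a * b * p ^ m) p d
  have h₁ : a * b * p ^ m * p = a * b * p ^ (m + 1) := by ring
  have h₂ : a * (b / p) * p ^ (m + 1) = a * b * p ^ m := by field_simp; ring
  have h₃ : a / p * b * p ^ (m + 1) = a * b * p ^ m := by field_simp; ring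
  have h₄ : b / p * c / p * p = b * c / p := by field_simp
  have h₅ : a / p * p = a := by field_simp
  obtain ⟨hpm, hpm'⟩ := qp_succ_ne_zero_iff.1 (qp_self_ne_zero hp (m + 1))
  obtain ⟨hcm, hcm'⟩ := qp_succ_ne_zero_iff.1 (qp_ne_zero_of_le hm hc)
  simp only [racahDefect, racahCertificate, racahTerm, Nat.add_sub_cancel_left, hd, h₂, h₃,
    qp_succ' (a * b * p ^ m), h₁]
  rw [qp_succ' (b / p * c / p), qp_succ' (a / p), h₄, h₅, qp_succ _ p (m + 1),
    qp_succ _ p (m + 1)]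
  simp only [qp_succ a, qp_succ (b * c / p), qp_succ p p, qp_succ c]
  rw [h₁] at hshift
  clear h₁ h₂ h₃ h₄ h₅ hc
  generalize qp (p ^ (m + 1 + d))⁻¹ p (m + 1) = X₁, qp (p ^ (m + 1 + d + 1)) p (m + 1) = X₂,
    qp a p m = A, qp (b * c / p) p m = Y, qp (a * b * p ^ (m + 1)) p d = Z,
    qp (a * b * p ^ m) p d = Z', qp p p m = D₁, qp c p m = D₂ at *
  have hP := pow_ne_zero m hp₀
  have hR := pow_ne_zero d hp₀
  simp only [pow_add p, pow_one, mul_assoc (p ^ m)] at *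
  generalize p ^ m = P, p ^ d = R at *
  rw [mul_comm] at hpm' hcm'
  linear_combination (norm := (field_simp; ring))
    P * p * R * X₁ * X₂ * A * Y * (P * p) / ((D₁ * (1 - P * p)) ^ 2 * (D₂ * (1 - c * P))) *
      (a * (b - p) * (b * c - p ^ 2) * (1 - a * P) * (1 - b * c / p ^ 2) +
        p * b * (a - p) * (c - a) * (1 - a / p) * (1 - b * c / p * P)) * hshift

theorem one_sub_mul_sum_racahDefect (hp₀ : p ≠ 0) (hp : ¬ IsOfFinOrder p) (hc : qp c p k ≠ 0)
    (a b : ℂ) {M : ℕ} (hM : M ≤ k) :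
    (1 - a * b * p ^ k / p) * ∑ m ∈ range (M + 1), racahDefect p a b c k m =
      racahCertificate p a b c k M := by
  induction M with
  | zero => rw [Finset.sum_range_one, one_sub_mul_racahDefect_zero hp₀]
  | succ M ih =>
    rw [Finset.sum_range_succ, mul_add, ih (by omega),
      one_sub_mul_racahDefect_succ hp₀ hp hc a b hM, add_sub_cancel]

/-- The closed form of the partial sums carries a factor `1 - a b pᵏ⁻¹`; it is cancelled for generic
`b`, and the remaining `b` follow by continuity. -/
theorem racahSum_div_contiguous (hp₀ : p ≠ 0) (hp : ¬ IsOfFinOrder p) (hc : qp c p k ≠ 0)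
    (a b : ℂ) :
    (a * b - p ^ (k + 2)) * (b * c - a * p) * racahSum p a b c k =
      p ^ k * (a * (b - p) * (b * c - p ^ 2) * racahSum p a (b / p) c k +
        p * b * (a - p) * (c - a) * racahSum p (a / p) b c k) := by
  suffices h : (fun b ↦ (a * b - p ^ (k + 2)) * (b * c - a * p) * racahSum p a b c k) =
      fun b ↦ p ^ k * (a * (b - p) * (b * c - p ^ 2) * racahSum p a (b / p) c k +
        p * b * (a - p) * (c - a) * racahSum p (a / p) b c k) from congrFun h b
  refine Continuous.ext_on (s := {b | 1 - a * b * p ^ k / p ≠ 0}) ?_ ?_ ?_ fun b hb ↦ ?_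
  · rcases eq_or_ne a 0 with rfl | ha
    · simp
    · refine (dense_compl_singleton (p / (a * p ^ k))).mono ?_
      intro b hb h
      have hk := pow_ne_zero k hp₀
      refine hb (Set.mem_singleton_iff.2 ?_)
      field_simp at h ⊢
      linear_combination -h
  · unfold racahSum racahTerm qp
    fun_prop
  · unfold racahSum racahTerm qp
    fun_prop
  · have hzero : qp (p ^ k)⁻¹ p (k + 1) = 0 :=
      qp_eq_zero_iff.2 ⟨k, k.lt_succ_self, inv_mul_cancel₀ (pow_ne_zero k hp₀)⟩
    have h := one_sub_mul_sum_racahDefect hp₀ hp hc a b le_rfl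
    simp only [racahCertificate, hzero, zero_mul, mul_zero, zero_div] at h
    have h := (mul_eq_zero.1 h).resolve_left hb
    simp only [racahDefect, Finset.sum_sub_distrib, Finset.sum_add_distrib, ← Finset.mul_sum,
      sub_eq_zero] at h
    exact h

theorem racahSum_mul_contiguous (hp₀ : p ≠ 0) (a b : ℂ) :
    (b * c - a * p) * (a * b * p ^ k - 1) * racahSum p a b c k =
      b * (c - p * a) * (a - 1) * racahSum p (a * p) b c k +
        a * (b - 1) * (b * c - p) * racahSum p a (b * p) c k := by
  simp only [racahSum, Finset.mul_sum, ← Finset.sum_add_distrib]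
  refine Finset.sum_congr rfl fun m hm ↦ ?_
  obtain ⟨d, rfl⟩ := Nat.exists_eq_add_of_le (Finset.mem_range_succ_iff.1 hm)
  have h₁ := one_sub_mul_qp_mul a p m
  have h₂ := one_sub_mul_qp_mul (b * c / p) p m
  have h₃ := one_sub_mul_qp_mul (a * b * p ^ m) p d
  have e₁ : b * p * c / p = b * c / p * p := by ring
  have e₂ : a * p * b * p ^ m = a * b * p ^ m * p := by ring
  have e₃ : a * (b * p) * p ^ m = a * b * p ^ m * p := by ring
  simp only [racahTerm, Nat.add_sub_cancel_left, e₁, e₂, e₃]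
  have h₄ : (b * c - p) * qp (b * c / p * p) p m = qp (b * c / p) p m * (b * c * p ^ m - p) := by
    field_simp at h₂ ⊢
    linear_combination -h₂
  rw [mul_assoc _ (p ^ m) (p ^ d), ← pow_add] at h₃
  linear_combination
    qp (p ^ (m + d))⁻¹ p m * qp (p ^ (m + d + 1)) p m / (qp p p m ^ 2 * qp c p m) * p ^ m *
      ((b * c - a * p) * qp a p m * qp (b * c / p) p m * h₃ +
        b * (c - p * a) * qp (b * c / p) p m * qp (a * b * p ^ m * p) p d * h₁ -
        a * (b - 1) * qp a p m * qp (a * b * p ^ m * p) p d * h₄)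

theorem racahSum_zpow_succ_contiguous (hp₀ : p ≠ 0) (hp : ¬ IsOfFinOrder p) {l : ℤ}
    (hl : qp (p ^ (-l)) p k ≠ 0) (n j : ℤ) :
    (1 - p ^ (l - j + n + 1)) * (1 - p ^ (n + j + k + 2)) *
        racahSum p (p ^ (-j)) (p ^ (-n)) (p ^ (-l)) k =
      p ^ k * ((1 - p ^ (n + 1)) * (1 - p ^ (l + n + 2)) *
          racahSum p (p ^ (-j)) (p ^ (-(n + 1))) (p ^ (-l)) k +
        p ^ (n + 1) * (1 - p ^ (j + 1)) * (1 - p ^ (l - j)) *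
          racahSum p (p ^ (-(j + 1))) (p ^ (-n)) (p ^ (-l)) k) := by
  have h := racahSum_div_contiguous hp₀ hp hl (p ^ (-j)) (p ^ (-n))
  have hj := zpow_ne_zero j hp₀
  have hn := zpow_ne_zero n hp₀
  have hl₀ := zpow_ne_zero l hp₀
  have hdiv (m : ℤ) : p ^ (-m) / p = p ^ (-(m + 1)) := by
    rw [div_eq_mul_inv, ← zpow_sub_one₀ hp₀, ← neg_add']
  rw [hdiv, hdiv] at h
  generalize racahSum p (p ^ (-j)) (p ^ (-n)) (p ^ (-l)) k = T,
    racahSum p (p ^ (-j)) (p ^ (-(n + 1))) (p ^ (-l)) k = T₁,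
    racahSum p (p ^ (-(j + 1))) (p ^ (-n)) (p ^ (-l)) k = T₂ at h ⊢
  simp only [zpow_add₀ hp₀, zpow_sub₀ hp₀, _root_.zpow_neg, zpow_natCast, pow_add,
    zpow_ofNat] at h ⊢
  generalize p ^ n = y, p ^ j = z, p ^ l = w, p ^ k = v at *
  linear_combination (norm := (field_simp; ring)) y ^ 2 * z * w * h

theorem racahSum_zpow_pred_contiguous (hp₀ : p ≠ 0) (n j l : ℤ) :
    (1 - p ^ (l - j + n + 1)) * (p ^ k - p ^ (n + j)) *
        racahSum p (p ^ (-j)) (p ^ (-n)) (p ^ (-l)) k =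
      p ^ n * (1 - p ^ (l - j + 1)) * (1 - p ^ j) *
          racahSum p (p ^ (-(j - 1))) (p ^ (-n)) (p ^ (-l)) k +
        (1 - p ^ n) * (1 - p ^ (l + n + 1)) *
          racahSum p (p ^ (-j)) (p ^ (-(n - 1))) (p ^ (-l)) k := by
  have h := racahSum_mul_contiguous (k := k) (c := p ^ (-l)) hp₀ (p ^ (-j)) (p ^ (-n))
  have hj := zpow_ne_zero j hp₀
  have hn := zpow_ne_zero n hp₀
  have hl₀ := zpow_ne_zero l hp₀
  have hmul (m : ℤ) : p ^ (-m) * p = p ^ (-(m - 1)) := by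
    rw [← zpow_add_one₀ hp₀, neg_sub, neg_add_eq_sub]
  rw [hmul, hmul] at h
  generalize racahSum p (p ^ (-j)) (p ^ (-n)) (p ^ (-l)) k = T,
    racahSum p (p ^ (-j)) (p ^ (-(n - 1))) (p ^ (-l)) k = T₁,
    racahSum p (p ^ (-(j - 1))) (p ^ (-n)) (p ^ (-l)) k = T₂ at h ⊢
  simp only [zpow_add₀ hp₀, zpow_sub₀ hp₀, _root_.zpow_neg, zpow_one] at h ⊢
  generalize p ^ n = y, p ^ j = z, p ^ l = w, p ^ k = v at *
  linear_combination (norm := (field_simp; ring)) y ^ 2 * z * w * h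

theorem racahSum_zpow_eq_zero (hp₀ : p ≠ 0) (hp : ¬ IsOfFinOrder p) {j n : ℕ}
    (h : n + j < k) (c : ℂ) : racahSum p (p ^ (-j : ℤ)) (p ^ (-n : ℤ)) c k = 0 := by
  refine Finset.sum_eq_zero fun m _ ↦ ?_
  rcases lt_or_ge j m with hjm | hmj
  · have : qp (p ^ (-j : ℤ)) p m = 0 := (qp_zpow_eq_zero_iff hp₀ hp).2 ⟨by omega, by omega⟩
    simp only [racahTerm, this, mul_zero, zero_mul, zero_div]
  · have : qp (p ^ (-j : ℤ) * p ^ (-n : ℤ) * p ^ m) p (k - m) = 0 := by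
      rw [← zpow_natCast p m, ← zpow_add₀ hp₀, ← zpow_add₀ hp₀, qp_zpow_eq_zero_iff hp₀ hp]
      omega
    simp only [racahTerm, this, mul_zero, zero_div, zero_mul]

theorem racahSum_one (hp₀ : p ≠ 0) (hp : ¬ IsOfFinOrder p) (hc₀ : c ≠ 0) (hc : qp c p k ≠ 0)
    (a : ℂ) :
    racahSum p a 1 c k = qp a p k * (c / p) ^ k * qp (p ^ 2 / c) p k / qp c p k := by
  have hk := qp_self_ne_zero hp k
  have hterm : ∀ m ∈ range (k + 1),
      racahTerm p a 1 c k m = qp a p k * balancedTerm p (c / p) c p (p ^ k) m := by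
    intro m hm
    obtain ⟨d, rfl⟩ := Nat.exists_eq_add_of_le (Finset.mem_range_succ_iff.1 hm)
    have e : c * p * p ^ (m + d) / (c / p * p) = p ^ (m + d + 1) := by field_simp; ring
    rw [racahTerm, balancedTerm, e, qp_add a, Nat.add_sub_cancel_left, mul_one, one_mul]
    ring
  rw [racahSum, Finset.sum_congr rfl hterm, ← Finset.mul_sum,
    sum_balancedTerm hp₀ hp (div_ne_zero hc₀ hp₀) hc hk]
  have e₁ : c / (c / p) = p := by field_simp
  have e₂ : p / (c / p) = p ^ 2 / c := by field_simp
  rw [e₁, e₂]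
  field_simp

end Racah

section Decoupled

variable {q : ℂ} {L : ℕ} {C : ℂ → ℂ → ℕ → Polynomial ℂ}

/-- The `(k, j)` entry of the decoupled matrix polynomial `L(x)ᵀ P_n(x)`: a `q`-Racah polynomial in
`j` times a continuous `q`-ultraspherical polynomial in `x`. Integer indices allow the boundary
values `n = -1`, `j = -1` and `j = L + 1` of the recurrence. -/
def decoupledEntry (q : ℂ) (L : ℕ) (C : ℂ → ℂ → ℕ → Polynomial ℂ) (x : ℂ) (k : ℕ) (n j : ℤ) : ℂ :=
  (-1) ^ k * q ^ (2 * k * (L + 1) - k ^ 2 : ℤ) * q ^ ((2 * k + 1) * (n + j)) *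
      (qp ((q ^ 2) ^ (-L : ℤ)) (q ^ 2) k /
        (qp (q ^ 2) (q ^ 2) k * qp ((q ^ 2) ^ (L + 2)) (q ^ 2) k)) *
    racahSum (q ^ 2) ((q ^ 2) ^ (-j)) ((q ^ 2) ^ (-n)) ((q ^ 2) ^ (-L : ℤ)) k *
      ultraNormalized C (q ^ 2) ((q ^ 2) ^ (k + 1)) x (n + j - k).toNat

theorem racahSum_mul_ultraNormalized_recurrence (hC : IsUltra C) {p : ℂ} (hp₀ : p ≠ 0)
    (hp : ¬ IsOfFinOrder p) (k n j : ℕ) (c x : ℂ) :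
    racahSum p (p ^ (-j : ℤ)) (p ^ (-n : ℤ)) c k *
        ((p ^ k - p ^ (n + j + 2 * k + 2)) *
            ultraNormalized C p (p ^ (k + 1)) x (n + j + 1 - k : ℤ).toNat +
          (p ^ k - p ^ (n + j)) * ultraNormalized C p (p ^ (k + 1)) x (n + j - 1 - k : ℤ).toNat) =
      racahSum p (p ^ (-j : ℤ)) (p ^ (-n : ℤ)) c k *
        (2 * x * p ^ k * (1 - p ^ (n + j + 1)) *
          ultraNormalized C p (p ^ (k + 1)) x (n + j - k : ℤ).toNat) := by
  rcases lt_or_ge (n + j) k with h | h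
  · rw [racahSum_zpow_eq_zero hp₀ hp h, zero_mul, zero_mul]
  · obtain ⟨s, hs⟩ := Nat.exists_eq_add_of_le h
    have hβ (r : ℕ) : qp ((p ^ (k + 1)) ^ 2) p r ≠ 0 := by
      rw [← pow_mul, show (k + 1) * 2 = 2 * k + 1 + 1 by ring]
      exact qp_pow_succ_ne_zero hp (2 * k + 1) r
    have hrec := ultraNormalized_recurrence hC hp hβ x s
    have e₀ : (n + j - k : ℤ).toNat = s := by omega
    have e₁ : (n + j + 1 - k : ℤ).toNat = s + 1 := by omega
    have e₂ : (n + j - 1 - k : ℤ).toNat = s - 1 := by omega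
    rw [e₀, e₁, e₂, hs]
    linear_combination racahSum p (p ^ (-j : ℤ)) (p ^ (-n : ℤ)) c k * p ^ k * hrec

theorem decoupledEntry_recurrence (hC : IsUltra C) (hq : q ≠ 0) (hp : ¬ IsOfFinOrder (q ^ 2))
    {k : ℕ} (hk : k ≤ L) (n j : ℕ) (x : ℂ) :
    2 * x * (1 - (q ^ 2) ^ (n + j + 1)) * (1 - (q ^ 2) ^ (L - j + n + 1 : ℤ)) *
        decoupledEntry q L C x k n j =
      q⁻¹ * (1 - (q ^ 2) ^ (n + 1)) * (1 - (q ^ 2) ^ (L + n + 2)) *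
          decoupledEntry q L C x k (n + 1) j +
        q * (q ^ 2) ^ n * (1 - (q ^ 2) ^ (L - j + 1 : ℤ)) * (1 - (q ^ 2) ^ j) *
          decoupledEntry q L C x k n (j - 1) +
        q * (q ^ 2) ^ n * (1 - (q ^ 2) ^ (j + 1)) * (1 - (q ^ 2) ^ (L - j : ℤ)) *
          decoupledEntry q L C x k n (j + 1) +
        q * (1 - (q ^ 2) ^ n) * (1 - (q ^ 2) ^ (L + n + 1)) *
          decoupledEntry q L C x k (n - 1) j := by
  have hp₀ : q ^ 2 ≠ 0 := pow_ne_zero 2 hq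
  have hL : qp ((q ^ 2) ^ (-L : ℤ)) (q ^ 2) k ≠ 0 := by
    rw [Ne, qp_zpow_eq_zero_iff hp₀ hp]; omega
  have hup := racahSum_zpow_succ_contiguous hp₀ hp hL n j
  have hdown := racahSum_zpow_pred_contiguous (k := k) hp₀ n j L
  have hultra := racahSum_mul_ultraNormalized_recurrence hC hp₀ hp k n j ((q ^ 2) ^ (-L : ℤ)) x
  have hweight (m : ℤ) : q ^ ((2 * k + 1) * m) = ((q ^ 2) ^ k * q) ^ m := by
    rw [← pow_mul, ← pow_succ, ← zpow_natCast q, ← _root_.zpow_mul]; push_cast; rfl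
  have e₁ : (n + 1 + j : ℤ) = n + j + 1 := by ring
  have e₂ : (n + (j - 1) : ℤ) = n + j - 1 := by ring
  have e₃ : (n + (j + 1) : ℤ) = n + j + 1 := by ring
  have e₄ : (n - 1 + j : ℤ) = n + j - 1 := by ring
  simp only [decoupledEntry, e₁, e₂, e₃, e₄, hweight]
  have hk₀ := pow_ne_zero k hp₀
  rw [zpow_add_one₀ (mul_ne_zero hk₀ hq), zpow_sub_one₀ (mul_ne_zero hk₀ hq)]
  generalize (-1 : ℂ) ^ k * q ^ (2 * k * (L + 1) - k ^ 2 : ℤ) = s,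
    qp ((q ^ 2) ^ (-L : ℤ)) (q ^ 2) k /
      (qp (q ^ 2) (q ^ 2) k * qp ((q ^ 2) ^ (L + 2)) (q ^ 2) k) = r,
    ((q ^ 2) ^ k * q) ^ (n + j : ℤ) = w,
    ultraNormalized C (q ^ 2) ((q ^ 2) ^ (k + 1)) x (n + j + 1 - k : ℤ).toNat = D₁,
    ultraNormalized C (q ^ 2) ((q ^ 2) ^ (k + 1)) x (n + j - 1 - k : ℤ).toNat = D₂,
    ultraNormalized C (q ^ 2) ((q ^ 2) ^ (k + 1)) x (n + j - k : ℤ).toNat = D,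
    racahSum (q ^ 2) ((q ^ 2) ^ (-j : ℤ)) ((q ^ 2) ^ (-n : ℤ)) ((q ^ 2) ^ (-L : ℤ)) k = T,
    racahSum (q ^ 2) ((q ^ 2) ^ (-j : ℤ)) ((q ^ 2) ^ (-(n + 1) : ℤ)) ((q ^ 2) ^ (-L : ℤ)) k = T₁,
    racahSum (q ^ 2) ((q ^ 2) ^ (-(j + 1) : ℤ)) ((q ^ 2) ^ (-n : ℤ)) ((q ^ 2) ^ (-L : ℤ)) k = T₂,
    racahSum (q ^ 2) ((q ^ 2) ^ (-(j - 1) : ℤ)) ((q ^ 2) ^ (-n : ℤ)) ((q ^ 2) ^ (-L : ℤ)) k = T₃,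
    racahSum (q ^ 2) ((q ^ 2) ^ (-j : ℤ)) ((q ^ 2) ^ (-(n - 1) : ℤ)) ((q ^ 2) ^ (-L : ℤ)) k = T₄
    at hup hdown hultra ⊢
  have hj := pow_ne_zero j hp₀
  simp only [zpow_add₀ hp₀, zpow_sub₀ hp₀, zpow_natCast, zpow_ofNat, pow_add, pow_mul',
    pow_one] at hup hdown hultra ⊢
  generalize (q ^ 2) ^ k = K, (q ^ 2) ^ n = y, (q ^ 2) ^ j = z, (q ^ 2) ^ L = v at *
  linear_combination (norm := (field_simp; ring))
    -s * r * w / K * ((1 - v / z * y * q ^ 2) * hultra - K * D₁ * hup - D₂ * hdown)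

end Decoupled

section DecoupledMatrix

variable {q : ℂ} {L : ℕ} {C : ℂ → ℂ → ℕ → Polynomial ℂ}

/-- The decoupled matrix polynomial, identified with `L(x)ᵀ P_n(x)` in `evP_eq`. -/
def decoupledMatrix (q : ℂ) (L : ℕ) (C : ℂ → ℂ → ℕ → Polynomial ℂ) (n : ℤ) (x : ℂ) :
    Matrix (Fin (L + 1)) (Fin (L + 1)) ℂ :=
  Matrix.of fun k j ↦ decoupledEntry q L C x k n j

theorem sum_mul_ite_eq_of_boundary (f u v : ℤ → ℂ) (hu : u (-1) = 0) (hv : v (L + 1) = 0)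
    (j : Fin (L + 1)) :
    ∑ i : Fin (L + 1), f i * (if (j : ℕ) = i + 1 then u i else if (i : ℕ) = j + 1 then v i else 0) =
      f (j - 1) * u (j - 1) + f (j + 1) * v (j + 1) := by
  obtain ⟨j, hj⟩ := j
  have hsplit (i : ℕ) :
      f i * (if j = i + 1 then u i else if i = j + 1 then v i else 0) =
        (if j = i + 1 then f i * u i else 0) + if i = j + 1 then f i * v i else 0 := by
    split_ifs <;> first | omega | ring
  rw [Fin.sum_univ_eq_sum_range
    (fun i ↦ f i * (if j = i + 1 then u i else if i = j + 1 then v i else 0)) (L + 1)]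
  simp only [hsplit, Finset.sum_add_distrib, Finset.sum_ite_eq', Finset.mem_range]
  congr 1
  · rcases j with _ | j
    · simp [hu]
    · simp only [Nat.add_right_cancel_iff, Finset.sum_ite_eq, Finset.mem_range]
      rw [if_pos (by omega)]
      simp
  · split_ifs with h
    · simp
    · obtain rfl : j = L := by omega
      simp [hv]

theorem mul_Bmat_apply (M : Matrix (Fin (L + 1)) (Fin (L + 1)) ℂ) (f : ℤ → ℂ) (n : ℕ)
    (k j : Fin (L + 1)) (hf : ∀ i : Fin (L + 1), M k i = f i) :
    (M * Bmat q L n) k j =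
      (f (j - 1) * ((1 - (q ^ 2) ^ (L - j + 1 : ℤ)) * (1 - (q ^ 2) ^ (j : ℕ))) +
          f (j + 1) * ((1 - (q ^ 2) ^ ((j : ℕ) + 1)) * (1 - (q ^ 2) ^ (L - j : ℤ)))) *
        (q * (q ^ 2) ^ n / 2) /
          ((1 - (q ^ 2) ^ (n + j + 1)) * (1 - (q ^ 2) ^ (L - j + n + 1 : ℤ))) := by
  have htri := sum_mul_ite_eq_of_boundary f
    (fun i ↦ q ^ (2 * n + 1) / 2 * ((1 - q ^ (2 * L - 2 * i)) * (1 - q ^ (2 * i + 2))) /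
      ((1 - q ^ (2 * L + 2 * n - 2 * i)) * (1 - q ^ (2 * n + 2 * i + 4))))
    (fun i ↦ q ^ (2 * n + 1) / 2 * ((1 - q ^ (2 * i)) * (1 - q ^ (2 * L - 2 * i + 2))) /
      ((1 - q ^ (2 * n + 2 * i)) * (1 - q ^ (2 * L - 2 * i + 2 * n + 4))))
    (by simp) (by simp [show (2 * L - 2 * (L + 1) + 2 : ℤ) = 0 by ring]) j
  simp only [Matrix.mul_apply, Bmat, Matrix.of_apply, hf, htri]
  rw [show (2 * L - 2 * (j - 1) : ℤ) = 2 * (L - j + 1) by ring,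
    show (2 * (j - 1) + 2 : ℤ) = 2 * (j : ℕ) by ring,
    show (2 * L + 2 * n - 2 * (j - 1) : ℤ) = 2 * (L - j + n + 1) by ring,
    show (2 * n + 2 * (j - 1) + 4 : ℤ) = 2 * (n + j + 1 : ℕ) by push_cast; ring,
    show (2 * (j + 1) : ℤ) = 2 * (j + 1 : ℕ) by push_cast; ring,
    show (2 * L - 2 * (j + 1 : ℕ) + 2 : ℤ) = 2 * (L - j) by push_cast; ring,
    show (2 * n + 2 * (j + 1 : ℕ) : ℤ) = 2 * (n + j + 1 : ℕ) by push_cast; ring,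
    show (2 * L - 2 * (j + 1 : ℕ) + 2 * n + 4 : ℤ) = 2 * (L - j + n + 1) by push_cast; ring]
  simp only [zpow_two_mul_eq_sq_zpow, zpow_natCast]
  ring

theorem decoupledMatrix_recurrence (hC : IsUltra C) (hq : q ≠ 0) (hp : ¬ IsOfFinOrder (q ^ 2))
    (n : ℕ) (x : ℂ) :
    x • decoupledMatrix q L C n x =
      decoupledMatrix q L C (n + 1) x * Amat q L n + decoupledMatrix q L C n x * Bmat q L n +
        decoupledMatrix q L C (n - 1) x * Cmat q L n := by
  ext k j
  have hrec := decoupledEntry_recurrence hC hq hp (Nat.lt_succ_iff.1 k.2) n j x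
  have hD₁ : 1 - (q ^ 2) ^ (n + j + 1) ≠ 0 := by
    exact_mod_cast one_sub_zpow_ne_zero hp (n := (n + j + 1 : ℕ)) (by omega)
  have hD₂ : 1 - (q ^ 2) ^ (L - j + n + 1 : ℤ) ≠ 0 := one_sub_zpow_ne_zero hp (by omega)
  simp only [Matrix.add_apply, Matrix.smul_apply, smul_eq_mul]
  rw [mul_Bmat_apply _ (fun i ↦ decoupledEntry q L C x k n i) n k j fun i ↦ rfl]
  simp only [Amat, Cmat, Matrix.mul_diagonal, decoupledMatrix, Matrix.of_apply]
  rw [show (2 * n + 2 : ℤ) = 2 * (n + 1 : ℕ) by push_cast; ring,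
    show (2 * L + 2 * n + 4 : ℤ) = 2 * (L + n + 2 : ℕ) by push_cast; ring,
    show (2 * (j : ℕ) + 2 * n + 2 : ℤ) = 2 * (n + j + 1 : ℕ) by push_cast; ring,
    show (2 * L - 2 * (j : ℕ) + 2 * n + 2 : ℤ) = 2 * (L - j + n + 1) by ring,
    show (2 * L + 2 * n + 2 : ℤ) = 2 * (L + n + 1 : ℕ) by push_cast; ring,
    show (2 * n + 2 * (j : ℕ) + 2 : ℤ) = 2 * (n + j + 1 : ℕ) by push_cast; ring,
    show (2 * L + 2 * n - 2 * (j : ℕ) + 2 : ℤ) = 2 * (L - j + n + 1) by ring]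
  simp only [zpow_two_mul_eq_sq_zpow, zpow_natCast]
  generalize 1 - (q ^ 2) ^ (n + j + 1) = D₁, 1 - (q ^ 2) ^ (L - j + n + 1 : ℤ) = D₂ at *
  linear_combination (norm := (field_simp; ring)) hrec / (2 * D₁ * D₂)

end DecoupledMatrix

section Coupling

variable {q : ℂ} {L : ℕ} {C : ℂ → ℂ → ℕ → Polynomial ℂ}

theorem decoupledEntry_eq_zero (hq : q ≠ 0) (hp : ¬ IsOfFinOrder (q ^ 2)) {k n j : ℕ}
    (h : n + j < k) (x : ℂ) : decoupledEntry q L C x k n j = 0 := by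
  rw [decoupledEntry, racahSum_zpow_eq_zero (pow_ne_zero 2 hq) hp h, mul_zero, zero_mul]

theorem decoupledEntry_zero (hq : q ≠ 0) (hp : ¬ IsOfFinOrder (q ^ 2)) {k j : ℕ} (hkL : k ≤ L)
    (hkj : k ≤ j) (x : ℂ) :
    decoupledEntry q L C x k 0 j =
      q ^ (j - k : ℤ) * qp (q ^ 2) (q ^ 2) j * qp (q ^ 2) (q ^ 2) (2 * k + 1) /
          (qp (q ^ 2) (q ^ 2) (j + k + 1) * qp (q ^ 2) (q ^ 2) k) *
        (C (q ^ 2) ((q ^ 2) ^ (k + 1)) (j - k)).eval x := by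
  have hp₀ := pow_ne_zero 2 hq
  have hG : qp ((q ^ 2) ^ (L + 2)) (q ^ 2) k ≠ 0 := qp_pow_succ_ne_zero hp (L + 1) k
  have hH : qp ((q ^ 2) ^ (2 * k + 1 + 1)) (q ^ 2) (j - k) ≠ 0 :=
    qp_pow_succ_ne_zero hp (2 * k + 1) (j - k)
  have hc : qp ((q ^ 2) ^ (-L : ℤ)) (q ^ 2) k ≠ 0 := by
    rw [Ne, qp_zpow_eq_zero_iff hp₀ hp]; omega
  have hsplit := qp_add (q ^ 2) (q ^ 2) (2 * k + 1) (j - k)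
  rw [show 2 * k + 1 + (j - k) = j + k + 1 by omega, ← pow_succ'] at hsplit
  have hexp : q ^ (j - k : ℤ) =
      q ^ (2 * k * (L + 1) - k ^ 2 : ℤ) * q ^ ((2 * k + 1) * (0 + j) : ℤ) *
        ((q ^ 2) ^ (-L : ℤ) / q ^ 2) ^ k * q ^ (k ^ 2 - k - 2 * j * k : ℤ) := by
    rw [div_eq_mul_inv, ← zpow_sub_one₀ hp₀, ← zpow_natCast, ← _root_.zpow_mul,
      ← zpow_two_mul_eq_sq_zpow, ← zpow_add₀ hq, ← zpow_add₀ hq, ← zpow_add₀ hq]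
    congr 1
    ring
  have hβ : ((q ^ 2) ^ (k + 1)) ^ 2 = (q ^ 2) ^ (2 * k + 1 + 1) := by ring
  have hc₂ : (q ^ 2) ^ 2 / (q ^ 2) ^ (-L : ℤ) = (q ^ 2) ^ (L + 2) := by
    rw [_root_.zpow_neg, zpow_natCast]; field_simp; ring
  rw [decoupledEntry, neg_zero, zpow_zero, racahSum_one hp₀ hp (zpow_ne_zero _ hp₀) hc, hc₂,
    ultraNormalized, hβ, show (0 + j - k : ℤ).toNat = j - k by omega, hsplit, hexp]
  have hk := qp_self_ne_zero hp k
  have hk' := qp_self_ne_zero hp (2 * k + 1)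
  field_simp
  linear_combination
    (C (q ^ 2) ((q ^ 2) ^ (k + 1)) (j - k)).eval x * qp_sq_zpow_neg_mul_qp_sub hq hkj

theorem decoupledMatrix_zero (hq : q ≠ 0) (hp : ¬ IsOfFinOrder (q ^ 2)) (x : ℂ) :
    decoupledMatrix q L C 0 x = (Lm q L C x)ᵀ := by
  ext k j
  simp only [decoupledMatrix, Matrix.transpose_apply, Lm, Matrix.of_apply]
  split_ifs with hkj
  · have hβ : (q ^ 2) ^ ((k : ℕ) + 1) = q ^ (2 * (k : ℕ) + 2) := by rw [← pow_mul]; congr 1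
    rw [decoupledEntry_zero hq hp (Nat.lt_succ_iff.1 k.2) hkj, hβ]
  · exact decoupledEntry_eq_zero (n := 0) hq hp (by omega) x

theorem qp_mul_qRacah_eq_racahSum (hq : q ≠ 0) (hp : ¬ IsOfFinOrder (q ^ 2)) (L : ℕ) {k n j : ℕ}
    (hk : k ≤ n + j) :
    qp (q ^ (-(2 * j + 2 * n) : ℤ)) (q ^ 2) k *
        qRacah (q ^ 2) 1 1 (q ^ (-(2 * n + 2 * j + 2) : ℤ)) (q ^ (-(2 * L + 2) : ℤ)) k j =
      racahSum (q ^ 2) ((q ^ 2) ^ (-j : ℤ)) ((q ^ 2) ^ (-n : ℤ)) ((q ^ 2) ^ (-L : ℤ)) k := by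
  have hp₀ := pow_ne_zero 2 hq
  have hsq : q ^ 2 = q ^ (2 : ℤ) := (zpow_ofNat q 2).symm
  have hγ : q ^ (-(2 * n + 2 * j + 2) : ℤ) * q ^ 2 = q ^ (-(2 * j + 2 * n) : ℤ) := by
    rw [hsq, ← zpow_add₀ hq]; congr 1; ring
  have hγx : q ^ (-(2 * n + 2 * j + 2) : ℤ) * (q ^ 2) ^ (j + 1) = (q ^ 2) ^ (-n : ℤ) := by
    rw [← zpow_natCast (q ^ 2), ← zpow_two_mul_eq_sq_zpow, ← zpow_two_mul_eq_sq_zpow,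
      ← zpow_add₀ hq]
    congr 1
    push_cast
    ring
  have hδ : q ^ (-(2 * L + 2) : ℤ) * q ^ 2 = (q ^ 2) ^ (-L : ℤ) := by
    rw [← zpow_two_mul_eq_sq_zpow, hsq, ← zpow_add₀ hq]; congr 1; ring
  have hne : qp (q ^ (-(2 * j + 2 * n) : ℤ)) (q ^ 2) k ≠ 0 := by
    rw [show (-(2 * j + 2 * n) : ℤ) = 2 * (-(n + j)) by ring, zpow_two_mul_eq_sq_zpow, Ne,
      qp_zpow_eq_zero_iff hp₀ hp]
    omega
  have h := qp_mul_qRacah hp₀ (hγ ▸ hne) (q ^ (-(2 * L + 2) : ℤ)) j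
  rwa [hγ, hγx, hδ, ← zpow_natCast (q ^ 2) j, ← _root_.zpow_neg] at h

theorem sum_Icc_eq_sum_fin {M : Type*} [AddCommMonoid M] {a b : ℕ} (hb : b ≤ L) {f : ℕ → M}
    {g : Fin (L + 1) → M} (hfg : ∀ k : Fin (L + 1), (k : ℕ) ∈ Finset.Icc a b → f k = g k)
    (hg : ∀ k : Fin (L + 1), (k : ℕ) ∉ Finset.Icc a b → g k = 0) :
    ∑ k ∈ Finset.Icc a b, f k = ∑ k, g k := by
  have hg' (k : Fin (L + 1)) : g k = if (k : ℕ) ∈ Finset.Icc a b then f k else 0 := by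
    split_ifs with hk
    exacts [(hfg k hk).symm, hg k hk]
  have hrange : {k ∈ range (L + 1) | k ∈ Finset.Icc a b} = Finset.Icc a b := by
    ext k
    rw [Finset.mem_filter, Finset.mem_range, Finset.mem_Icc]
    omega
  simp_rw [hg']
  rw [Fin.sum_univ_eq_sum_range (fun k ↦ if k ∈ Finset.Icc a b then f k else 0),
    ← Finset.sum_filter, hrange]

theorem evP_eq (hq : q ≠ 0) (hp : ¬ IsOfFinOrder (q ^ 2)) (n : ℕ) (x : ℂ) :
    evP q L C n x = (Linv q L C x)ᵀ * decoupledMatrix q L C n x := by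
  ext i j
  simp only [evP, Pm, Matrix.map_apply, Matrix.of_apply, Polynomial.eval_finsetSum,
    Polynomial.eval_mul, Polynomial.eval_C, Matrix.mul_apply, Matrix.transpose_apply,
    decoupledMatrix]
  refine sum_Icc_eq_sum_fin (min_le_left _ _) (fun k hk ↦ ?_) fun k hk ↦ ?_
  · obtain ⟨k, hkL⟩ := k
    simp only [Finset.mem_Icc, le_min_iff] at hk
    have hR := qp_mul_qRacah_eq_racahSum hq hp L hk.2.2
    simp only [Linv, Matrix.of_apply, if_pos hk.1, decoupledEntry, ultraNormalized, ← hR]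
    have hexp : q ^ (n + (2 * k + 1) * (k - (i : ℕ)) + (j : ℕ) * (2 * k + 1) +
          2 * k * (L + n + 1) - k ^ 2 : ℤ) =
        q ^ ((2 * k + 1) * (k - (i : ℕ)) : ℤ) *
          (q ^ (2 * k * (L + 1) - k ^ 2 : ℤ) * q ^ ((2 * k + 1) * (n + (j : ℕ)) : ℤ)) := by
      rw [← zpow_add₀ hq, ← zpow_add₀ hq]
      congr 1
      ring
    have hβ : ((q ^ 2) ^ (k + 1)) ^ 2 = q ^ (4 * k + 4 : ℤ) := by
      rw [← pow_mul, ← pow_mul, ← zpow_natCast]; congr 1; push_cast; ring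
    have hβ' : (q ^ 2) ^ (k + 1) = q ^ (2 * k + 2 : ℤ) := by
      rw [← pow_mul, ← zpow_natCast]; congr 1
    have hL : (q ^ 2) ^ (L + 2) = q ^ (2 * L + 4 : ℤ) := by
      rw [← pow_mul, ← zpow_natCast]; congr 1
    rw [hexp, hβ, hβ', hL, ← zpow_two_mul_eq_sq_zpow, mul_neg,
      show (n + (j : ℕ) - k : ℤ).toNat = n + j - k by omega]
    ring
  · rw [Finset.mem_Icc, le_min_iff] at hk
    rcases lt_or_ge (k : ℕ) i with hki | hik
    · simp only [Linv, Matrix.of_apply, if_neg hki.not_ge, zero_mul]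
    · rw [decoupledEntry_eq_zero hq hp (by omega), mul_zero]

end Coupling

section TriangularInverse

variable {q : ℂ} {L : ℕ} {C : ℂ → ℂ → ℕ → Polynomial ℂ}

theorem sum_mul_eq_zero_of_eigen {l v α β γ : ℤ → ℂ} {a b : ℂ} (hab : a ≠ b)
    (hl : ∀ n : ℕ, (a - α n) * l n = γ n * l (n - 1) + β n * l (n - 2))
    (hv : ∀ n : ℕ, (b - α n) * v n = γ (n + 1) * v (n + 1) + β (n + 2) * v (n + 2))
    (hl₁ : l (-1) = 0) (hl₂ : l (-2) = 0) {M : ℕ} (hM : v M = 0) (hM' : v (M + 1) = 0) :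
    ∑ n ∈ range M, l n * v n = 0 := by
  let G (n : ℕ) : ℂ :=
    γ n * v n * l (n - 1) + β n * v n * l (n - 2) + β (n + 1) * v (n + 1) * l (n - 1)
  have hG₀ : G 0 = 0 := by simp [G, hl₁, hl₂]
  have hGM : G M = 0 := by simp [G, hM, hM']
  have hstep (n : ℕ) : (a - b) * (l n * v n) = -(G (n + 1) - G n) := by
    simp only [G, Nat.cast_add, Nat.cast_one, add_sub_cancel_right,
      show (n + 1 - 2 : ℤ) = n - 1 by ring, show (n + 1 + 1 : ℤ) = n + 2 by ring]
    linear_combination v n * hl n - l n * hv n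
  have hsum : (a - b) * ∑ n ∈ range M, l n * v n = 0 := by
    rw [Finset.mul_sum, Finset.sum_congr rfl fun n _ ↦ hstep n, Finset.sum_neg_distrib,
      Finset.sum_range_sub, hG₀, hGM, sub_zero, neg_zero]
  exact (mul_eq_zero.1 hsum).resolve_left (sub_ne_zero.2 hab)

/-- Up to factors depending on `n` or `k` alone, the entry `(n, k)` of `Lm`. -/
def lowerEntry (q : ℂ) (C : ℂ → ℂ → ℕ → Polynomial ℂ) (x : ℂ) (k : ℕ) (n : ℤ) : ℂ :=
  q ^ n * ultraExt C (q ^ 2) ((q ^ 2) ^ (k + 1)) x (n - k) / qp (q ^ 2) (q ^ 2) (n + k + 1).toNat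

/-- Up to factors depending on `n` or `k` alone, the entry `(k, n)` of `Linv`. -/
def lowerInvEntry (q : ℂ) (C : ℂ → ℂ → ℕ → Polynomial ℂ) (x : ℂ) (k : ℕ) (n : ℤ) : ℂ :=
  q ^ (-(2 * k + 1) * n) * qp (q ^ 2) (q ^ 2) (k + n).toNat *
    ultraExt C (q ^ 2) ((q ^ 2) ^ (-k : ℤ)) x (k - n)

/-- The common eigenvalue `p⁻ⁿ + pⁿ⁺¹` of the two recurrences in `n` satisfied by `lowerEntry` and
`lowerInvEntry`. -/
def lowerEigenvalue (p : ℂ) (n : ℤ) : ℂ := p ^ (-n) + p ^ (n + 1)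

theorem lowerEigenvalue_sub {p : ℂ} (hp₀ : p ≠ 0) (k n : ℤ) :
    lowerEigenvalue p k - lowerEigenvalue p n =
      -(p ^ (-n) * (1 - p ^ (n - k)) * (1 - p ^ (n + k + 1))) := by
  have hk := zpow_ne_zero k hp₀
  have hn := zpow_ne_zero n hp₀
  simp only [lowerEigenvalue, zpow_add₀ hp₀, zpow_sub₀ hp₀, _root_.zpow_neg, zpow_one]
  field_simp
  ring

theorem lowerEigenvalue_natCast_injective {p : ℂ} (hp₀ : p ≠ 0) (hp : ¬ IsOfFinOrder p) :
    Function.Injective fun n : ℕ ↦ lowerEigenvalue p n := by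
  intro k n h
  by_contra hkn
  have h := sub_eq_zero.2 h
  simp only [lowerEigenvalue_sub hp₀] at h
  exact neg_ne_zero.2 (mul_ne_zero (mul_ne_zero (zpow_ne_zero _ hp₀)
    (one_sub_zpow_ne_zero hp (by omega))) (one_sub_zpow_ne_zero hp (by omega))) h

theorem lowerEntry_of_lt {k : ℕ} {n : ℤ} (h : n < k) (x : ℂ) : lowerEntry q C x k n = 0 := by
  rw [lowerEntry, ultraExt_of_neg _ _ _ _ (by omega), mul_zero, zero_div]

theorem lowerInvEntry_of_lt {k : ℕ} {n : ℤ} (h : k < n) (x : ℂ) : lowerInvEntry q C x k n = 0 := by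
  rw [lowerInvEntry, ultraExt_of_neg _ _ _ _ (by omega), mul_zero]

theorem ultraExt_div_qp_recurrence (hC : IsUltra C) {p : ℂ} (hp₀ : p ≠ 0)
    (hp : ¬ IsOfFinOrder p) (k d : ℕ) (x : ℂ) :
    (1 - p ^ d) * (1 - p ^ (2 * k + d + 1)) *
        (ultraExt C p (p ^ (k + 1)) x d / qp p p (2 * k + d + 1)) =
      2 * x * (1 - p ^ (k + d)) * (ultraExt C p (p ^ (k + 1)) x (d - 1) / qp p p (2 * k + d)) -
        ultraExt C p (p ^ (k + 1)) x (d - 2) / qp p p (2 * k + d - 1) := by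
  have hrec := ultraExt_recurrence hC hp (p ^ (k + 1)) x (d - 1)
  have hpow₁ : p ^ (k + 1) * p ^ (d - 1 : ℤ) = p ^ (k + d) := by
    rw [← zpow_natCast, ← zpow_natCast, ← zpow_add₀ hp₀]
    congr 1; push_cast; ring
  have hpow₂ : (p ^ (k + 1)) ^ 2 * p ^ (d - 2 : ℤ) = p ^ (2 * k + d) := by
    rw [← pow_mul, ← zpow_natCast, ← zpow_natCast, ← zpow_add₀ hp₀]
    congr 1; push_cast; ring
  rw [sub_add_cancel, hpow₁, show (d - 1 - 1 : ℤ) = d - 2 by ring, hpow₂, zpow_natCast] at hrec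
  have hne := qp_self_ne_zero hp (2 * k + d + 1)
  have hlast : ultraExt C p (p ^ (k + 1)) x (d - 2) / qp p p (2 * k + d - 1) =
      (1 - p ^ (2 * k + d)) * ultraExt C p (p ^ (k + 1)) x (d - 2) / qp p p (2 * k + d) := by
    rcases (2 * k + d).eq_zero_or_pos with h | h
    · rw [ultraExt_of_neg _ _ _ _ (by omega), mul_zero, zero_div, zero_div]
    · obtain ⟨m, hm⟩ := Nat.exists_eq_succ_of_ne_zero h.ne'
      have hne := qp_self_ne_zero hp (m + 1)
      rw [hm, Nat.succ_eq_add_one, Nat.add_sub_cancel]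
      rw [qp_succ, ← pow_succ'] at hne ⊢
      rw [mul_comm (1 - _), mul_div_mul_right _ _ (right_ne_zero_of_mul hne)]
  rw [hlast]
  rw [qp_succ, ← pow_succ'] at hne ⊢
  have hne₁ := left_ne_zero_of_mul hne
  have hne₂ := right_ne_zero_of_mul hne
  linear_combination (norm := (field_simp; ring)) hrec / qp p p (2 * k + d)

theorem lowerEntry_recurrence (hC : IsUltra C) (hq : q ≠ 0) (hp : ¬ IsOfFinOrder (q ^ 2))
    (k : ℕ) (n : ℤ) (x : ℂ) :
    (lowerEigenvalue (q ^ 2) k - lowerEigenvalue (q ^ 2) n) * lowerEntry q C x k n =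
      -2 * x * q * (q ^ 2) ^ (-n) * (1 - (q ^ 2) ^ n) * lowerEntry q C x k (n - 1) +
        q ^ 2 * (q ^ 2) ^ (-n) * lowerEntry q C x k (n - 2) := by
  have hp₀ := pow_ne_zero 2 hq
  rcases lt_or_ge n k with hnk | hkn
  · simp only [lowerEntry_of_lt, show n - 1 < k by omega, show n - 2 < k by omega, hnk, mul_zero,
      add_zero]
  obtain ⟨d, rfl⟩ := Int.le.dest hkn
  have hrec := ultraExt_div_qp_recurrence hC hp₀ hp k d x
  rw [lowerEigenvalue_sub hp₀, show (k + d - k : ℤ) = d by ring, show (k + d + k + 1 : ℤ) =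
    (2 * k + d + 1 : ℕ) by push_cast; ring]
  simp only [lowerEntry, show (k + d + k + 1 : ℤ).toNat = 2 * k + d + 1 by omega,
    show (k + d - 1 + k + 1 : ℤ).toNat = 2 * k + d by omega,
    show (k + d - 2 + k + 1 : ℤ).toNat = 2 * k + d - 1 by omega,
    show (k + d - k : ℤ) = d by ring, show (k + d - 1 - k : ℤ) = d - 1 by ring,
    show (k + d - 2 - k : ℤ) = d - 2 by ring, mul_div_assoc]
  rw [← Nat.cast_add, zpow_natCast, zpow_sub₀ hq, zpow_sub₀ hq, zpow_one, zpow_ofNat]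
  simp only [zpow_natCast]
  generalize ultraExt C (q ^ 2) ((q ^ 2) ^ (k + 1)) x d / _ = u at *
  linear_combination (norm := skip) -(q ^ 2) ^ (-(k + d : ℕ) : ℤ) * q ^ (k + d) * hrec
  field_simp
  ring

theorem lowerInvEntry_recurrence (hC : IsUltra C) (hq : q ≠ 0) (hp : ¬ IsOfFinOrder (q ^ 2))
    (k n : ℕ) (x : ℂ) :
    (lowerEigenvalue (q ^ 2) k - lowerEigenvalue (q ^ 2) n) * lowerInvEntry q C x k n =
      -2 * x * q * (q ^ 2) ^ (-(n + 1) : ℤ) * (1 - (q ^ 2) ^ (n + 1 : ℤ)) *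
          lowerInvEntry q C x k (n + 1) +
        q ^ 2 * (q ^ 2) ^ (-(n + 2) : ℤ) * lowerInvEntry q C x k (n + 2) := by
  have hp₀ := pow_ne_zero 2 hq
  have hrec := ultraExt_recurrence hC hp ((q ^ 2) ^ (-k : ℤ)) x (k - n - 1)
  rw [lowerEigenvalue_sub hp₀]
  simp only [lowerInvEntry, show (k + n : ℤ).toNat = k + n by omega,
    show (k + (n + 1) : ℤ).toNat = k + n + 1 by omega,
    show (k + (n + 2) : ℤ).toNat = k + n + 2 by omega, qp_succ (q ^ 2) (q ^ 2) (k + n + 1)]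
  have hweight (m : ℤ) : q ^ (-(2 * k + 1) * (n + m)) =
      q ^ (-(2 * k + 1) * n : ℤ) * (q * (q ^ 2) ^ k) ^ (-m) := by
    rw [← pow_mul, ← pow_succ', ← zpow_natCast, ← _root_.zpow_mul, ← zpow_add₀ hq]
    congr 1; push_cast; ring
  rw [hweight, hweight]
  simp only [sub_add_cancel, show (k - (n + 1) : ℤ) = k - n - 1 by ring,
    show (k - (n + 2) : ℤ) = k - n - 1 - 1 by ring] at hrec ⊢
  generalize ultraExt _ _ _ _ (k - n : ℤ) = u, ultraExt _ _ _ _ (k - n - 1 : ℤ) = u₁,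
    ultraExt _ _ _ _ (k - n - 1 - 1 : ℤ) = u₂, q ^ (-(2 * k + 1) * n : ℤ) = e at *
  simp only [zpow_add₀ hp₀, zpow_sub₀ hp₀, _root_.zpow_neg, pow_add, zpow_natCast, zpow_ofNat,
    qp_succ] at hrec ⊢
  have hkp := pow_ne_zero k hp₀
  have hnp := pow_ne_zero n hp₀
  generalize qp (q ^ 2) (q ^ 2) (k + n) = F, (q ^ 2) ^ k = v, (q ^ 2) ^ n = w at *
  linear_combination (norm := (field_simp; ring)) v⁻¹ * e * F * (1 - q ^ 2 * (v * w)) * hrec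

theorem sum_lowerEntry_mul_lowerInvEntry (hC : IsUltra C) (hq : q ≠ 0)
    (hp : ¬ IsOfFinOrder (q ^ 2)) {k m M : ℕ} (hkm : k ≠ m) (hk : k < M) (x : ℂ) :
    ∑ n ∈ range M, lowerEntry q C x m n * lowerInvEntry q C x k n = 0 :=
  sum_mul_eq_zero_of_eigen
    ((lowerEigenvalue_natCast_injective (pow_ne_zero 2 hq) hp).ne hkm.symm)
    (α := lowerEigenvalue (q ^ 2)) (β := fun n ↦ q ^ 2 * (q ^ 2) ^ (-n))
    (γ := fun n ↦ -2 * x * q * (q ^ 2) ^ (-n) * (1 - (q ^ 2) ^ n))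
    (fun n ↦ lowerEntry_recurrence hC hq hp m n x) (fun n ↦ lowerInvEntry_recurrence hC hq hp k n x)
    (lowerEntry_of_lt (by omega) x) (lowerEntry_of_lt (by omega) x)
    (lowerInvEntry_of_lt (by omega) x) (lowerInvEntry_of_lt (by omega) x)

theorem Lm_apply_eq (hq : q ≠ 0) (k n : Fin (L + 1)) (x : ℂ) :
    Lm q L C x n k =
      qp (q ^ 2) (q ^ 2) (2 * k + 1) / (q ^ (k : ℕ) * qp (q ^ 2) (q ^ 2) k) *
        (qp (q ^ 2) (q ^ 2) n * lowerEntry q C x k n) := by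
  simp only [Lm, Matrix.of_apply]
  split_ifs with h
  · rw [lowerEntry, zpow_sub₀ hq, ← Nat.cast_sub h, ultraExt_natCast,
      show (n + k + 1 : ℤ).toNat = n + k + 1 by omega,
      show 2 * (k : ℕ) + 2 = 2 * (k + 1) by ring, pow_mul, zpow_natCast, zpow_natCast]
    ring
  · rw [lowerEntry_of_lt (by omega), mul_zero, mul_zero]

theorem Linv_apply_eq (hq : q ≠ 0) (k n : Fin (L + 1)) (x : ℂ) :
    Linv q L C x k n =
      q ^ ((2 * k + 1) * k : ℤ) * qp (q ^ 2) (q ^ 2) k / qp (q ^ 2) (q ^ 2) (2 * k) *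
        (lowerInvEntry q C x k n / qp (q ^ 2) (q ^ 2) n) := by
  simp only [Linv, Matrix.of_apply]
  split_ifs with h
  · rw [lowerInvEntry,
      show (2 * k + 1) * (k - n) = (2 * k + 1) * k + -(2 * k + 1) * (n : ℤ) by ring, zpow_add₀ hq,
      ← Nat.cast_sub h, ultraExt_natCast, ← Nat.cast_add, Int.toNat_natCast,
      show (-(2 * k) : ℤ) = 2 * (-k) by ring, zpow_two_mul_eq_sq_zpow]
    ring
  · rw [lowerInvEntry_of_lt (by omega), zero_div, mul_zero]

theorem Linv_mul_Lm_apply_self (hC : IsUltra C) (hp : ¬ IsOfFinOrder (q ^ 2)) (k : Fin (L + 1))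
    (x : ℂ) : (Linv q L C x * Lm q L C x) k k = 1 := by
  have hne := qp_self_ne_zero hp
  rw [Matrix.mul_apply, Finset.sum_eq_single k]
  · have hk := hne k
    have h2k := hne (2 * k)
    have h2k' := hne (2 * k + 1)
    simp only [Linv, Lm, Matrix.of_apply, le_refl, if_true, sub_self, mul_zero, zpow_zero, one_mul,
      Nat.sub_self, hC.eval_zero, mul_one, ← two_mul]
    field_simp
  · intro n _ hn
    rcases lt_or_gt_of_ne hn with h | h
    · simp [Lm, h]
    · simp [Linv, h]
  · exact fun h ↦ absurd (Finset.mem_univ k) h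

theorem Linv_mul_Lm (hC : IsUltra C) (hq : q ≠ 0) (hp : ¬ IsOfFinOrder (q ^ 2)) (x : ℂ) :
    Linv q L C x * Lm q L C x = 1 := by
  ext k m
  rcases eq_or_ne k m with rfl | hkm
  · rw [Linv_mul_Lm_apply_self hC hp, Matrix.one_apply_eq]
  · have hsum := sum_lowerEntry_mul_lowerInvEntry hC hq hp (Fin.val_ne_of_ne hkm) k.2 x
    have hcancel (n : Fin (L + 1)) (a b u v : ℂ) :
        b * (v / qp (q ^ 2) (q ^ 2) n) * (a * (qp (q ^ 2) (q ^ 2) n * u)) = a * b * (u * v) := by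
      have hn := qp_self_ne_zero hp n
      field_simp
    rw [Matrix.mul_apply, Matrix.one_apply_ne hkm]
    simp only [Lm_apply_eq hq, Linv_apply_eq hq, hcancel]
    rw [← Finset.mul_sum, Fin.sum_univ_eq_sum_range
      (fun n ↦ lowerEntry q C x m n * lowerInvEntry q C x k n), hsum, mul_zero]

end TriangularInverse

theorem Cmat_zero (q : ℂ) (L : ℕ) : Cmat q L 0 = 0 := by
  simp [Cmat]

theorem evP_zero {q : ℂ} {L : ℕ} {C : ℂ → ℂ → ℕ → Polynomial ℂ} (hC : IsUltra C) (hq : q ≠ 0)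
    (hp : ¬ IsOfFinOrder (q ^ 2)) (x : ℂ) : evP q L C 0 x = 1 := by
  rw [evP_eq hq hp, Nat.cast_zero, decoupledMatrix_zero hq hp, ← Matrix.transpose_mul,
    mul_eq_one_comm.1 (Linv_mul_Lm hC hq hp x), Matrix.transpose_one]

theorem stmt3_general {q : ℂ} (hq : q ≠ 0) (hq' : ¬ IsOfFinOrder q) (L : ℕ)
    {C : ℂ → ℂ → ℕ → Polynomial ℂ} (hC : IsUltra C) :
    (∀ x : ℂ, evP q L C 0 x = 1) ∧
      ∀ (n : ℕ) (x : ℂ),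
        x • evP q L C n x =
          evP q L C (n + 1) x * Amat q L n + evP q L C n x * Bmat q L n +
            (if n = 0 then 0 else evP q L C (n - 1) x) * Cmat q L n := by
  have hp : ¬ IsOfFinOrder (q ^ 2) := fun h ↦ hq' (h.of_pow two_ne_zero)
  refine ⟨evP_zero hC hq hp, fun n x ↦ ?_⟩
  have hprev : (if n = 0 then 0 else evP q L C (n - 1) x) * Cmat q L n =
      (Linv q L C x)ᵀ * decoupledMatrix q L C (n - 1) x * Cmat q L n := by
    rcases n with _ | n
    · rw [Cmat_zero, mul_zero, mul_zero]
    · rw [if_neg n.succ_ne_zero, evP_eq hq hp, Nat.cast_succ, add_sub_cancel_right,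
        Nat.add_sub_cancel]
  rw [hprev, evP_eq hq hp n, evP_eq hq hp (n + 1), ← Matrix.mul_smul,
    decoupledMatrix_recurrence hC hq hp, Nat.cast_succ]
  simp only [mul_add, mul_assoc]

/-- `P_0 = I` and the three-term recurrence
`x P_n(x) = P_{n+1}(x) A_n + P_n(x) B_n + P_{n-1}(x) C_n` (with `P_{-1} := 0`). -/
theorem stmt3 (q : ℝ) (hq0 : 0 < q) (hq1 : q < 1) (L : ℕ)
    (C : ℂ → ℂ → ℕ → Polynomial ℂ) (hC : IsUltra C) :
    (∀ x : ℂ, evP (q : ℂ) L C 0 x = 1) ∧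
      ∀ (n : ℕ) (x : ℂ),
        x • evP (q : ℂ) L C n x =
          evP (q : ℂ) L C (n + 1) x * Amat (q : ℂ) L n +
            evP (q : ℂ) L C n x * Bmat (q : ℂ) L n +
            (if n = 0 then 0 else evP (q : ℂ) L C (n - 1) x) * Cmat (q : ℂ) L n :=
  stmt3_general (by exact_mod_cast hq0.ne')
    (fun h ↦ by simpa [abs_of_pos hq0, hq1.ne] using h.norm_eq_one) L hC

end
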